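/- arXiv:2206.07356 — 5 statements merged into one kernel-verified Lean document; each statement's English description precedes it below -/
import Mathlib

section
/- Let f : ℝ^n → ℝ be α-strongly convex (α > 0) with Fenchel conjugate f*(u) = sup_{z ∈ ℝ^n} (⟨u, z⟩ − f(z)). Let a ∈ ℝ^n with a ≠ 0, b ∈ ℝ, and H(a,b) = {x ∈ ℝ^n : ⟨a, x⟩ = b}. Let x ∈ ℝ^n, x* ∈ ∂f(x), let t̂ ∈ ℝ be a minimizer of t ↦ f*(x* − t·a) + t·b over ℝ, and let z ∈ ℝ^n be such that z* := x* − t̂·a ∈ ∂f(z). Then z ∈ H(a,b), and for every y ∈ H(a,b) one has D_f^{z*}(z, y) ≤ D_f^{x*}(x, y) − (α/2)·(⟨a, x⟩ − b)²/‖a‖². -/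
/-- Euclidean inner product on finite-dimensional real coordinate space. -/
noncomputable def ip {I : Type*} [Fintype I] (u v : I → ℝ) : ℝ := ∑ i, u i * v i

/-- Euclidean norm. -/
noncomputable def enorm2 {I : Type*} [Fintype I] (v : I → ℝ) : ℝ :=
  Real.sqrt (∑ i, (v i) ^ 2)

/-- ℓ₁ norm. -/
noncomputable def norm1 {I : Type*} [Fintype I] (v : I → ℝ) : ℝ := ∑ i, |v i|

/-- ℓ∞ norm. -/
noncomputable def normInf {I : Type*} [Fintype I] (v : I → ℝ) : ℝ := ⨆ i, |v i|

/-- Subdifferential of a convex function. -/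
def subdiff {I : Type*} [Fintype I] (f : (I → ℝ) → ℝ) (x : I → ℝ) : Set (I → ℝ) :=
  {g | ∀ y, f y ≥ f x + ip g (y - x)}

/-- Bregman distance `D_f^{g}(x, y)` with respect to `f` and subgradient `g ∈ ∂f(x)`. -/
noncomputable def breg {I : Type*} [Fintype I] (f : (I → ℝ) → ℝ) (g x y : I → ℝ) : ℝ :=
  f y - f x - ip g (y - x)

/-- Fenchel conjugate. -/
noncomputable def fconj {I : Type*} [Fintype I] (f : (I → ℝ) → ℝ) (u : I → ℝ) : ℝ :=
  ⨆ z, (ip u z - f z)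

/-- Soft shrinkage (soft thresholding) operator. -/
noncomputable def softShrink {I : Type*} [Fintype I] (lam : ℝ) (x : I → ℝ) : I → ℝ :=
  fun i => Real.sign (x i) * max (|x i| - lam) 0

/-- Smallest singular value `σ_min(M) = inf_{x ≠ 0} ‖Mx‖/‖x‖`. -/
noncomputable def sigmaMin {I J : Type*} [Fintype I] [Fintype J] (M : Matrix I J ℝ) : ℝ :=
  sInf {r | ∃ x : J → ℝ, x ≠ 0 ∧ r = enorm2 (M.mulVec x) / enorm2 x}

/-- Largest singular value `σ_max(M) = sup_{x ≠ 0} ‖Mx‖/‖x‖`. -/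
noncomputable def sigmaMax {I J : Type*} [Fintype I] [Fintype J] (M : Matrix I J ℝ) : ℝ :=
  sSup {r | ∃ x : J → ℝ, x ≠ 0 ∧ r = enorm2 (M.mulVec x) / enorm2 x}

/-- Frobenius norm. -/
noncomputable def frobNorm {I J : Type*} [Fintype I] [Fintype J] (M : Matrix I J ℝ) : ℝ :=
  Real.sqrt (∑ i, ∑ j, (M i j) ^ 2)

/-- `‖A‖_{1,2} = sqrt (∑ i ‖a_i‖₁²)` where `a_iᵀ` are the rows of `A`. -/
noncomputable def norm12 {m n : ℕ} (A : Matrix (Fin m) (Fin n) ℝ) : ℝ :=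
  Real.sqrt (∑ i, (norm1 (A i)) ^ 2)

/-- Column submatrix `A_J`. -/
noncomputable def colSub {m n : ℕ} (A : Matrix (Fin m) (Fin n) ℝ) (J : Finset (Fin n)) :
    Matrix (Fin m) {j // j ∈ J} ℝ := A.submatrix id Subtype.val

/-- Row submatrix `A_I`. -/
noncomputable def rowSub {m n : ℕ} (A : Matrix (Fin m) (Fin n) ℝ) (I : Finset (Fin m)) :
    Matrix {i // i ∈ I} (Fin n) ℝ := A.submatrix Subtype.val id

/-- Submatrix `A_{I,J}` with rows in `I` and columns in `J`. -/
noncomputable def subMat {m n : ℕ} (A : Matrix (Fin m) (Fin n) ℝ)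
    (I : Finset (Fin m)) (J : Finset (Fin n)) :
    Matrix {i // i ∈ I} {j // j ∈ J} ℝ := A.submatrix Subtype.val Subtype.val

/-- `σ̃_min(A) = min{σ_min(A_J) : J ⊆ {1,…,n}, A_J ≠ 0}`. -/
noncomputable def sigmaTildeMin {m n : ℕ} (A : Matrix (Fin m) (Fin n) ℝ) : ℝ :=
  sInf {r | ∃ J : Finset (Fin n), colSub A J ≠ 0 ∧ r = sigmaMin (colSub A J)}

/-- `σ̃_{q−β,min}(A)` (with `k = (q−β)m`): min of `σ_min(A_{I,J})` over `|I| = k` and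
`J` nonempty. -/
noncomputable def sigmaTildeQBMin {m n : ℕ} (A : Matrix (Fin m) (Fin n) ℝ) (k : ℕ) : ℝ :=
  sInf {r | ∃ (I : Finset (Fin m)) (J : Finset (Fin n)),
    I.card = k ∧ J.Nonempty ∧ r = sigmaMin (subMat A I J)}

/-- Variant of `σ̃_{q−β,min}(A)` requiring moreover `A_J ≠ 0`. -/
noncomputable def sigmaTildeQBMin' {m n : ℕ} (A : Matrix (Fin m) (Fin n) ℝ) (k : ℕ) : ℝ :=
  sInf {r | ∃ (I : Finset (Fin m)) (J : Finset (Fin n)),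
    I.card = k ∧ J.Nonempty ∧ colSub A J ≠ 0 ∧ r = sigmaMin (subMat A I J)}

/-- `σ_{q−β,min}(A)` (with `k = (q−β)m`): min of `σ_min(A_I)` over `|I| = k`. -/
noncomputable def sigmaQBMin {m n : ℕ} (A : Matrix (Fin m) (Fin n) ℝ) (k : ℕ) : ℝ :=
  sInf {r | ∃ I : Finset (Fin m), I.card = k ∧ r = sigmaMin (rowSub A I)}

/-- The increasingly sorted rearrangement `y_(1) ≤ … ≤ y_(m)` of a finite tuple. -/
noncomputable def sortedVal {m : ℕ} (y : Fin m → ℝ) : Fin m → ℝ := y ∘ Tuple.sort y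

/-- The `q`-quantile of `y_1, …, y_m` in the case where `qm = k` is an integer:
`(y_(k) + y_(k+1))/2` (1-indexed). -/
noncomputable def quantileAt {m : ℕ} (k : ℕ) (y : Fin m → ℝ) : ℝ :=
  if h : 0 < k ∧ k < m then
    (sortedVal y ⟨k - 1, by omega⟩ + sortedVal y ⟨k, h.2⟩) / 2
  else 0

/-- `|x̂|_min = min{|x̂_j| : x̂_j ≠ 0}`. -/
noncomputable def xminOf {n : ℕ} (xhat : Fin n → ℝ) : ℝ :=
  sInf {r | ∃ j, xhat j ≠ 0 ∧ r = |xhat j|}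

theorem ip_eq_dot {I : Type*} [Fintype I] (u v : I → ℝ) : ip u v = u ⬝ᵥ v := rfl

theorem enorm2_sq {I : Type*} [Fintype I] (v : I → ℝ) : enorm2 v ^ 2 = ip v v := by
  unfold enorm2 ip
  rw [Real.sq_sqrt (Finset.sum_nonneg fun i _ => sq_nonneg _)]
  exact Finset.sum_congr rfl fun i _ => by ring

theorem ip_self_nonneg' {I : Type*} [Fintype I] (v : I → ℝ) : 0 ≤ ip v v :=
  Finset.sum_nonneg fun i _ => mul_self_nonneg _

theorem ip_cs {I : Type*} [Fintype I] (u v : I → ℝ) : ip u v ^ 2 ≤ ip u u * ip v v := by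
  have := Finset.sum_mul_sq_le_sq_mul_sq Finset.univ u v
  simpa [ip, sq] using this

theorem ip_comm' {I : Type*} [Fintype I] (u v : I → ℝ) : ip u v = ip v u := by
  simp [ip_eq_dot, dotProduct_comm]

theorem ip_sub_r {I : Type*} [Fintype I] (u v w : I → ℝ) : ip u (v - w) = ip u v - ip u w := by
  simp [ip_eq_dot]

theorem ip_sub_l {I : Type*} [Fintype I] (u v w : I → ℝ) : ip (u - v) w = ip u w - ip v w := by
  simp [ip_eq_dot]

theorem ip_smul_l {I : Type*} [Fintype I] (c : ℝ) (u v : I → ℝ) : ip (c • u) v = c * ip u v := by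
  simp [ip_eq_dot]

theorem ip_smul_r {I : Type*} [Fintype I] (c : ℝ) (u v : I → ℝ) : ip u (c • v) = c * ip u v := by
  simp [ip_eq_dot]

theorem ip_self_pos {I : Type*} [Fintype I] (v : I → ℝ) (hv : v ≠ 0) : 0 < ip v v := by
  refine lt_of_le_of_ne (ip_self_nonneg' v) fun h => hv ?_
  rw [ip_eq_dot] at h
  exact dotProduct_self_eq_zero.1 h.symm

/-- Lemma 2.4: the Bregman projection onto a hyperplane `H(a,b)`
obtained from a minimizer `t̂` of `t ↦ f*(x* − t a) + t b` lies in `H(a,b)`, and for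
every `y ∈ H(a,b)` one has
`D_f^{z*}(z,y) ≤ D_f^{x*}(x,y) − (α/2) (⟨a,x⟩ − b)²/‖a‖²`. -/
theorem stmt1 {n : ℕ} (f : (Fin n → ℝ) → ℝ) (hconv : ConvexOn ℝ Set.univ f)
    (α : ℝ) (hα : 0 < α)
    (hstrong : ∀ x y g, g ∈ subdiff f x →
      f y ≥ f x + ip g (y - x) + α / 2 * enorm2 (y - x) ^ 2)
    (a : Fin n → ℝ) (ha : a ≠ 0) (b : ℝ)
    (x xs : Fin n → ℝ) (hxs : xs ∈ subdiff f x)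
    (that : ℝ)
    (hthat : ∀ t : ℝ, fconj f (xs - that • a) + that * b ≤ fconj f (xs - t • a) + t * b)
    (z : Fin n → ℝ) (hz : xs - that • a ∈ subdiff f z) :
    ip a z = b ∧
    ∀ y : Fin n → ℝ, ip a y = b →
      breg f (xs - that • a) z y ≤
        breg f xs x y - α / 2 * (ip a x - b) ^ 2 / enorm2 a ^ 2 := by
  have hA := ip_self_pos a ha
  have key : ∀ s : ℝ, 0 ≤ s * (ip a z - b) + s ^ 2 * ip a a / (2 * α) := by
    intro s
    have h1 := hthat (that - s)
    have h2 : ip (xs - that • a) z - f z ≤ fconj f (xs - that • a) := by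
      unfold fconj
      refine le_ciSup (f := fun w => ip (xs - that • a) w - f w) ?_ z
      refine ⟨ip (xs - that • a) z - f z, ?_⟩
      rintro _ ⟨y, rfl⟩
      have := hz y
      rw [ip_sub_r] at this
      dsimp only
      linarith
    have h3 : fconj f (xs - (that - s) • a) ≤
        ip (xs - that • a) z + s * ip a z - f z + s ^ 2 * ip a a / (2 * α) := by
      unfold fconj
      refine ciSup_le fun y => ?_
      have h := hstrong z y _ hz
      rw [enorm2_sq] at h
      have hsq := ip_self_nonneg' (s • a - α • (y - z))
      have e : ip (s • a - α • (y - z)) (s • a - α • (y - z)) =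
          s ^ 2 * ip a a - 2 * α * s * ip a (y - z) + α ^ 2 * ip (y - z) (y - z) := by
        rw [ip_sub_l, ip_sub_r, ip_sub_r]
        simp only [ip_smul_l, ip_smul_r]
        rw [ip_comm' (y - z) a]
        ring
      rw [e] at hsq
      have hd : s * ip a (y - z) - α / 2 * ip (y - z) (y - z) ≤ s ^ 2 * ip a a / (2 * α) := by
        rw [le_div_iff₀ (by positivity)]
        linarith
      rw [ip_sub_r a] at hd
      simp only [ip_sub_l xs, ip_smul_l, ip_sub_r xs, ip_sub_r a] at h ⊢
      linarith
    linarith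
  have hzb : ip a z = b := by
    have h := key (-(α * (ip a z - b) / ip a a))
    have e : -(α * (ip a z - b) / ip a a) * (ip a z - b) +
        (-(α * (ip a z - b) / ip a a)) ^ 2 * ip a a / (2 * α) =
        -(α * (ip a z - b) ^ 2 / (2 * ip a a)) := by
      field_simp
      ring
    rw [e] at h
    by_contra hne
    have h0 : 0 < (ip a z - b) ^ 2 := by
      have := sub_ne_zero.2 hne
      positivity
    have : 0 < α * (ip a z - b) ^ 2 / (2 * ip a a) := by positivity
    linarith
  refine ⟨hzb, fun y hy => ?_⟩
  have h := hstrong x z xs hxs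
  rw [enorm2_sq] at h ⊢
  have hcs := ip_cs a (z - x)
  rw [ip_sub_r a, hzb] at hcs
  have hq : α / 2 * (ip a x - b) ^ 2 / ip a a ≤ α / 2 * ip (z - x) (z - x) := by
    rw [div_le_iff₀ hA, mul_assoc]
    refine mul_le_mul_of_nonneg_left ?_ (by positivity)
    linarith
  unfold breg
  simp only [ip_sub_l xs, ip_smul_l, ip_sub_r xs, ip_sub_r a, hzb, hy] at h ⊢
  linarith
end

section
/- Quantile bound (Lemma 3.1): let A ∈ ℝ^{m×n} have rows a_1ᵀ, …, a_mᵀ with ‖a_i‖ = 1 for all i. Let x̂ ∈ ℝ^n and b = A x̂ + b^c + r, where b^c ∈ ℝ^m has exactly βm nonzero entries and r ∈ ℝ^m. Assume β < q < 1 − β with qm and βm integers. For x ∈ ℝ^n let Q be the q-quantile of the residuals (|⟨a_i, x⟩ − b_i|)_{i=1}^m. Then Q ≤ (√(1 − β)/((1 − β − q)√m))·σ_max(A)·‖x − x̂‖ + ((1 − β)/(1 − β − q))·‖r‖_∞. -/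
lemma mulVec_bound {m n : ℕ} (A : Matrix (Fin m) (Fin n) ℝ)
    (hrows : ∀ i, enorm2 (A i) = 1) (e : Fin n → ℝ) :
    enorm2 (A.mulVec e) ≤ sigmaMax A * enorm2 e := by
  by_cases he : e = 0
  · subst he
    simp [enorm2]
  have hpos : 0 < enorm2 e := by
    unfold enorm2
    apply Real.sqrt_pos.mpr
    obtain ⟨j, hj⟩ := Function.ne_iff.mp he
    apply Finset.sum_pos' (fun i _ => sq_nonneg _)
    exact ⟨j, Finset.mem_univ _, by have : e j ≠ 0 := hj; positivity⟩
  rw [← div_le_iff₀ hpos]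
  apply le_csSup
  · refine ⟨Real.sqrt m, ?_⟩
    rintro _ ⟨z, hz, rfl⟩
    apply div_le_of_le_mul₀ (Real.sqrt_nonneg _) (Real.sqrt_nonneg _)
    unfold enorm2
    rw [← Real.sqrt_mul (by positivity)]
    apply Real.sqrt_le_sqrt
    have : ∀ i ∈ (Finset.univ : Finset (Fin m)), (A.mulVec z i) ^ 2 ≤ ∑ j, z j ^ 2 := by
      intro i _
      have h1 : ∑ j, (A i j) ^ 2 = 1 := by
        have := hrows i
        unfold enorm2 at this
        simpa using this
      have h2 := Finset.sum_mul_sq_le_sq_mul_sq Finset.univ (A i) z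
      rw [h1, one_mul] at h2
      exact h2
    have h3 := Finset.sum_le_sum this
    simpa using h3
  · exact ⟨e, he, rfl⟩

lemma sorted_card {m : ℕ} (y : Fin m → ℝ) (k : ℕ) (hk : k < m) :
    m - k ≤ (Finset.univ.filter (fun i => sortedVal y ⟨k, hk⟩ ≤ y i)).card := by
  have h1 : (Finset.Ici (⟨k, hk⟩ : Fin m)).card = m - k := by simp
  rw [← h1]
  apply Finset.card_le_card_of_injOn (Tuple.sort y)
  · intro i hi
    simp only [Finset.coe_Ici, Set.mem_Ici] at hi
    simp only [Finset.coe_filter, Finset.mem_univ, true_and, Set.mem_setOf_eq]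
    exact Tuple.monotone_sort y hi
  · exact (Tuple.sort y).injective.injOn

/-- Lemma 3.1, quantile bound: the `q`-quantile `Q` of the residuals
satisfies `Q ≤ (√(1−β)/((1−β−q)√m)) σ_max(A) ‖x − x̂‖ + ((1−β)/(1−β−q)) ‖r‖_∞`. -/
theorem stmt8 {m n : ℕ} (A : Matrix (Fin m) (Fin n) ℝ)
    (hrows : ∀ i, enorm2 (A i) = 1)
    (xhat : Fin n → ℝ) (bc r : Fin m → ℝ)
    (q β : ℝ) (hβq : β < q) (hq : q < 1 - β)
    (kq kb : ℕ) (hkq : (kq : ℝ) = q * m) (hkb : (kb : ℝ) = β * m)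
    (hbc : (Finset.univ.filter (fun i => bc i ≠ 0)).card = kb)
    (b : Fin m → ℝ) (hb : b = A.mulVec xhat + bc + r)
    (x : Fin n → ℝ)
    (Q : ℝ) (hQ : Q = quantileAt kq (fun i => |ip (A i) x - b i|)) :
    Q ≤ (Real.sqrt (1 - β) / ((1 - β - q) * Real.sqrt m)) * sigmaMax A *
          enorm2 (x - xhat) +
        ((1 - β) / (1 - β - q)) * normInf r := by
  classical
  have hRle : ∀ i, |r i| ≤ normInf r := fun i =>
    le_ciSup (f := fun i => |r i|) (Set.finite_range _).bddAbove i
  rcases Nat.eq_zero_or_pos m with hm | hm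
  · subst hm
    have : Q = 0 := by rw [hQ]; simp [quantileAt]
    rw [this]
    simp [normInf]
  have hmR : (0 : ℝ) < m := by exact_mod_cast hm
  have hc : 0 < 1 - β - q := by linarith
  have hβ0 : 0 ≤ β := by
    have : (0 : ℝ) ≤ β * m := by rw [← hkb]; positivity
    exact nonneg_of_mul_nonneg_left this hmR
  have hlt : kb < kq := by
    have : (kb : ℝ) < kq := by rw [hkb, hkq]; exact mul_lt_mul_of_pos_right hβq hmR
    exact_mod_cast this
  have hlt2 : kq + kb < m := by
    have : (kq : ℝ) + kb < m := by rw [hkb, hkq]; nlinarith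
    exact_mod_cast this
  have hkm : kq < m := by omega
  set y : Fin m → ℝ := fun i => |ip (A i) x - b i| with hy
  set Y := sortedVal y ⟨kq, hkm⟩ with hYdef
  have hQY : Q ≤ Y := by
    rw [hQ, quantileAt, dif_pos ⟨by omega, hkm⟩]
    have : sortedVal y ⟨kq - 1, by omega⟩ ≤ sortedVal y ⟨kq, hkm⟩ := by
      apply Tuple.monotone_sort y
      simp
    linarith
  have hY0 : 0 ≤ Y := by
    simp only [hYdef, sortedVal, Function.comp, hy]
    exact abs_nonneg _
  set C := Finset.univ.filter (fun i => bc i ≠ 0) with hC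
  set S := Finset.univ \ C with hS
  set T := Finset.univ.filter (fun i => Y ≤ y i) with hT
  have hTc : m - kq ≤ T.card := sorted_card y kq hkm
  have hTC : T.card - C.card ≤ (T \ C).card := Finset.le_card_sdiff _ _
  have hcard : (1 - β - q) * m ≤ ((T \ C).card : ℝ) := by
    have h : m ≤ (T \ C).card + kq + kb := by omega
    have h' : (m : ℝ) ≤ (T \ C).card + kq + kb := by exact_mod_cast h
    rw [hkq, hkb] at h'
    linarith
  have hScard : (S.card : ℝ) = (1 - β) * m := by
    have h : S.card + C.card = m := by
      have := Finset.card_sdiff_add_card_eq_card (Finset.subset_univ C)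
      simpa using this
    have h' : (S.card : ℝ) + C.card = m := by exact_mod_cast h
    rw [hbc, hkb] at h'
    linarith
  set e := x - xhat with he
  have h1 : (1 - β - q) * m * Y ≤ ∑ i ∈ S, y i := by
    calc (1 - β - q) * m * Y ≤ (T \ C).card * Y := mul_le_mul_of_nonneg_right hcard hY0
      _ = ∑ i ∈ T \ C, Y := by simp
      _ ≤ ∑ i ∈ T \ C, y i := Finset.sum_le_sum (fun i hi => by
          have := (Finset.mem_sdiff.mp hi).1
          exact (Finset.mem_filter.mp this).2)
      _ ≤ ∑ i ∈ S, y i := Finset.sum_le_sum_of_subset_of_nonneg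
          (Finset.sdiff_subset_sdiff (Finset.subset_univ _) le_rfl)
          (fun i _ _ => abs_nonneg _)
  have h2 : ∀ i ∈ S, y i ≤ |A.mulVec e i| + normInf r := by
    intro i hi
    have hi' : bc i = 0 := by
      have := (Finset.mem_sdiff.mp hi).2
      by_contra h
      exact this (Finset.mem_filter.mpr ⟨Finset.mem_univ _, h⟩)
    have h3 : ip (A i) x - b i = A.mulVec e i - r i := by
      have : ip (A i) x = A.mulVec x i := rfl
      rw [this, hb, he, Matrix.mulVec_sub]
      simp only [Pi.add_apply, Pi.sub_apply, hi']
      ring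
    have h4 : y i = |A.mulVec e i - r i| := by simp only [hy, h3]
    rw [h4]
    exact (abs_sub _ _).trans (by linarith [hRle i])
  have h5 : ∑ i ∈ S, |A.mulVec e i| ≤ Real.sqrt ((1 - β) * m) * enorm2 (A.mulVec e) := by
    rw [← hScard]
    unfold enorm2
    rw [← Real.sqrt_mul (by positivity)]
    apply Real.le_sqrt_of_sq_le
    refine sq_sum_le_card_mul_sum_sq.trans ?_
    apply mul_le_mul_of_nonneg_left _ (by positivity)
    simp only [sq_abs]
    exact Finset.sum_le_sum_of_subset_of_nonneg (Finset.subset_univ _)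
      (fun i _ _ => sq_nonneg _)
  have h6 : (1 - β - q) * m * Y ≤
      Real.sqrt ((1 - β) * m) * (sigmaMax A * enorm2 e) + (1 - β) * m * normInf r := by
    refine h1.trans ((Finset.sum_le_sum h2).trans ?_)
    rw [Finset.sum_add_distrib, Finset.sum_const, nsmul_eq_mul, hScard]
    have := mul_le_mul_of_nonneg_left (mulVec_bound A hrows e)
      (Real.sqrt_nonneg ((1 - β) * m))
    linarith
  refine hQY.trans ?_
  have hs : 0 < Real.sqrt m := Real.sqrt_pos.mpr hmR
  have hss : Real.sqrt m * Real.sqrt m = m := Real.mul_self_sqrt hmR.le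
  rw [Real.sqrt_mul (by linarith)] at h6
  have hfin : (Real.sqrt (1 - β) / ((1 - β - q) * Real.sqrt m)) * sigmaMax A * enorm2 e +
        ((1 - β) / (1 - β - q)) * normInf r =
      (Real.sqrt (1 - β) * Real.sqrt m * (sigmaMax A * enorm2 e) + (1 - β) * m * normInf r) /
        ((1 - β - q) * m) := by
    generalize Real.sqrt (m : ℝ) = s at *
    rw [← hss]
    field_simp
  rw [hfin, le_div_iff₀ (by positivity)]
  linarith
end

section
/- One-step inexact sparse Kaczmarz inequality against a possibly corrupted hyperplane: let λ > 0, f(x) = λ‖x‖₁ + (1/2)‖x‖² on ℝ^n. Let a ∈ ℝ^n with ‖a‖ = 1, x̂ ∈ ℝ^n, b̃ = ⟨a, x̂⟩, and b ∈ ℝ arbitrary. Let x ∈ ℝ^n, x* ∈ ∂f(x), and define x'* = x* − (⟨a, x⟩ − b)·a and x' = S_λ(x'*). Then D_f^{x'*}(x', x̂) ≤ D_f^{x*}(x, x̂) + (1/2)(⟨a, x⟩ − b)² − (⟨a, x⟩ − b)(⟨a, x⟩ − b̃). -/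
lemma strong_aux (P Q : ℝ) (h : ∀ s : ℝ, 0 < s → s ≤ 1 → (1 - s) / 2 * Q ≤ P) :
    Q / 2 ≤ P := by
  by_contra hc
  push Not at hc
  have h1 := h 1 one_pos le_rfl
  have hP : 0 ≤ P := by linarith
  have hQ : 0 < Q := by linarith
  have h2 := h ((Q / 2 - P) / Q) (div_pos (by linarith) hQ) (by
    rw [div_le_one hQ]; linarith)
  have h3 : (1 - (Q / 2 - P) / Q) / 2 * Q = (Q - (Q / 2 - P)) / 2 := by
    field_simp
  linarith

lemma enorm2_sq_s9 {n : ℕ} (v : Fin n → ℝ) : enorm2 v ^ 2 = ∑ i, v i ^ 2 := by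
  unfold enorm2
  exact Real.sq_sqrt (Finset.sum_nonneg fun i _ => sq_nonneg _)

lemma strong_convex_aux {n : ℕ} (lam : ℝ) (hlam : 0 < lam)
    (x xs y : Fin n → ℝ)
    (hxs : xs ∈ subdiff (fun x => lam * norm1 x + (1 / 2) * enorm2 x ^ 2) x) :
    (∑ i, (y i - x i) ^ 2) / 2 ≤ (lam * norm1 y + (1 / 2) * enorm2 y ^ 2)
      - (lam * norm1 x + (1 / 2) * enorm2 x ^ 2) - ip xs (y - x) := by
  apply strong_aux
  intro s hs hs1
  have h := hxs (x + s • (y - x))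
  have e1 : ip xs (x + s • (y - x) - x) = s * ip xs (y - x) := by
    simp only [ip, Finset.mul_sum]
    apply Finset.sum_congr rfl
    intro i _
    simp
    ring
  have e2 : norm1 (x + s • (y - x)) ≤ (1 - s) * norm1 x + s * norm1 y := by
    simp only [norm1, Finset.mul_sum, ← Finset.sum_add_distrib]
    apply Finset.sum_le_sum
    intro i _
    have : (x + s • (y - x)) i = (1 - s) * x i + s * y i := by simp; ring
    rw [this]
    refine (abs_add_le _ _).trans ?_
    rw [abs_mul, abs_mul, abs_of_pos hs, abs_of_nonneg (by linarith : 0 ≤ 1 - s)]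
  have e3 : enorm2 (x + s • (y - x)) ^ 2 = (1 - s) * enorm2 x ^ 2 + s * enorm2 y ^ 2
      - s * (1 - s) * ∑ i, (y i - x i) ^ 2 := by
    simp only [enorm2_sq_s9, Finset.mul_sum, ← Finset.sum_add_distrib, ← Finset.sum_sub_distrib]
    apply Finset.sum_congr rfl
    intro i _
    simp
    ring
  simp only [e1, e3] at h
  have e4 := mul_le_mul_of_nonneg_left e2 hlam.le
  refine le_of_mul_le_mul_left ?_ hs
  nlinarith

/-- inequality (3.9): one-step inexact sparse Kaczmarz inequality
against a possibly corrupted hyperplane: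
`D_f^{x'*}(x',x̂) ≤ D_f^{x*}(x,x̂) + ½(⟨a,x⟩−b)² − (⟨a,x⟩−b)(⟨a,x⟩−b̃)`. -/
theorem stmt9 {n : ℕ} (lam : ℝ) (hlam : 0 < lam)
    (f : (Fin n → ℝ) → ℝ)
    (hf : f = fun x => lam * norm1 x + (1 / 2) * enorm2 x ^ 2)
    (a : Fin n → ℝ) (ha : enorm2 a = 1)
    (xhat : Fin n → ℝ) (btilde : ℝ) (hbt : btilde = ip a xhat) (b : ℝ)
    (x xs : Fin n → ℝ) (hxs : xs ∈ subdiff f x)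
    (xs' x' : Fin n → ℝ)
    (hxs' : xs' = xs - (ip a x - b) • a)
    (hx' : x' = softShrink lam xs') :
    breg f xs' x' xhat ≤
      breg f xs x xhat + (1 / 2) * (ip a x - b) ^ 2 -
        (ip a x - b) * (ip a x - btilde) := by
  subst hf
  have h := strong_convex_aux lam hlam x xs x' hxs
  have ha2 : ∑ i, a i ^ 2 = 1 := by rw [← enorm2_sq_s9, ha]; norm_num
  clear hx'
  subst hbt
  generalize ht : ip a x - b = t at *
  subst hxs'
  have hsq : 0 ≤ ∑ i, (x' i - x i + t * a i) ^ 2 :=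
    Finset.sum_nonneg fun i _ => sq_nonneg _
  have e : ∑ i, (x' i - x i + t * a i) ^ 2 =
      ∑ i, (x' i - x i) ^ 2 + 2 * t * (ip a x' - ip a x) + t ^ 2 * ∑ i, a i ^ 2 := by
    simp only [ip, Finset.mul_sum, ← Finset.sum_add_distrib, ← Finset.sum_sub_distrib]
    apply Finset.sum_congr rfl
    intro i _
    ring
  have l1 : ∀ u v w : Fin n → ℝ, ip u (v - w) = ip u v - ip u w := by
    intro u v w
    simp [ip, mul_sub]
  have l2 : ∀ v : Fin n → ℝ, ip (xs - t • a) v = ip xs v - t * ip a v := by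
    intro v
    simp only [ip, Finset.mul_sum, ← Finset.sum_sub_distrib]
    apply Finset.sum_congr rfl
    intro i _
    simp
    ring
  simp only [breg, l1, l2] at h ⊢
  rw [ha2] at e
  linarith
end

section
/- One-step expectation bound for Quantile-RaSK with inexact step (Theorem 3.2(a)): let λ > 0, f(x) = λ‖x‖₁ + (1/2)‖x‖², let A ∈ ℝ^{m×n} be full rank with unit-norm rows a_1ᵀ, …, a_mᵀ, let b = A x̂ + b^c + r where b^c has exactly βm nonzero entries, A x̂ ≠ 0, and x̂ is the unique solution of min_x f(x) subject to A x = A x̂; assume β < q < 1 − β with qm, βm integers, and that condition (♦) holds: (2√(β(1−β))/(1−β−q))·(σ_max + √((1−β)m/n)) + (β(1−β)/(1−β−q)²)·(σ_max + 2√((1−β)m/n)) < (α(q−β)/(2q))·σ̃_{q−β,min}²/σ_max, where α = |x̂|_min/(|x̂|_min + 2λ). Let x ∈ ℝ^n with x* ∈ ∂f(x) ∩ Range(Aᵀ), let Q be the q-quantile of (|⟨a_i, x⟩ − b_i|)_{i=1}^m, let N₂ = {i : |⟨a_i, x⟩ − b_i| ≤ Q} and assume |N₂| = qm. For i ∈ N₂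 define x_i'* = x* − (⟨a_i, x⟩ − b_i)·a_i and x_i' = S_λ(x_i'*). Then (1/(qm))·Σ_{i ∈ N₂} D_f^{x_i'*}(x_i', x̂) ≤ (1 − C₁)·D_f^{x*}(x, x̂) + C₂·‖r‖_∞², where C₁ = (α(q−β)/(2q²))·σ̃_{q−β,min}²/m − (2√(β(1−β))/(q(1−β−q)))·(σ_max²/m + √(1−β)·σ_max/√(mn)) − (β(1−β)/(q(1−β−q)²))·(σ_max²/m + 2√(1−β)·σ_max/√(mn)) and C₂ = (√β(1−β)/(q(1−β−q)))·(1 + √(β(1−β))/(1−β−q))·√(n/m)·σ_max + (1/2)·β(1−β)²/(q(1−β−q)²) + 1/2. -/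
lemma h_scalar_sub {lam g x : ℝ} (hl : 0 < lam)
    (h : ∀ z : ℝ, lam * |z| + 1/2 * z^2 ≥ lam * |x| + 1/2 * x^2 + g * (z - x)) (w : ℝ) :
    lam * |w| ≥ lam * |x| + (g - x) * (w - x) := by
  by_contra! hc
  set d := lam * |x| + (g - x) * (w - x) - lam * |w| with hd
  have hd0 : 0 < d := by linarith
  -- for t in (0,1] : t d ≤ t^2 (w-x)^2/2
  have key : ∀ t : ℝ, 0 < t → t ≤ 1 → d ≤ t * (w - x)^2 / 2 := by
    intro t ht ht1
    have h1 := h (x + t * (w - x))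
    have h2 : |x + t * (w - x)| ≤ (1 - t) * |x| + t * |w| := by
      have : x + t * (w - x) = (1 - t) * x + t * w := by ring
      rw [this]
      refine (abs_add_le _ _).trans ?_
      rw [abs_mul, abs_mul, abs_of_nonneg (by linarith : (0:ℝ) ≤ 1 - t), abs_of_pos ht]
    have h3 := mul_le_mul_of_nonneg_left h2 hl.le
    have h4 : t * d ≤ t * (t * (w - x)^2 / 2) := by
      rw [hd]; nlinarith
    exact le_of_mul_le_mul_left h4 ht
  have hp : 0 < (w - x)^2 + d := by positivity
  have := key (d / ((w - x)^2 + d)) (by positivity) (by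
    rw [div_le_one hp]; nlinarith [sq_nonneg (w - x)])
  have h5 : d / ((w - x)^2 + d) * (w - x)^2 ≤ d := by
    rw [div_mul_eq_mul_div, div_le_iff₀ hp]; nlinarith [sq_nonneg (w-x)]
  linarith

lemma h_f_eq {n : ℕ} (lam : ℝ) (x : Fin n → ℝ) :
    lam * norm1 x + (1 / 2) * enorm2 x ^ 2 = ∑ j, (lam * |x j| + 1/2 * (x j)^2) := by
  unfold norm1 enorm2
  rw [Real.sq_sqrt (Finset.sum_nonneg fun i _ => sq_nonneg _), Finset.sum_add_distrib,
    Finset.mul_sum, Finset.mul_sum]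

lemma h_comp_sub {n : ℕ} {lam : ℝ} (hl : 0 < lam) {x g : Fin n → ℝ}
    (h : g ∈ subdiff (fun x : Fin n → ℝ => lam * norm1 x + (1 / 2) * enorm2 x ^ 2) x)
    (j : Fin n) (w : ℝ) : lam * |w| ≥ lam * |x j| + (g j - x j) * (w - x j) := by
  refine h_scalar_sub hl (fun z => ?_) w
  have h1 := h (Function.update x j z)
  simp only [h_f_eq, ip] at h1
  rw [← Finset.add_sum_erase _ _ (Finset.mem_univ j),
    ← Finset.add_sum_erase _ _ (Finset.mem_univ j),
    ← Finset.add_sum_erase _ (fun i => g i * (Function.update x j z - x) i) (Finset.mem_univ j)] at h1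
  have e1 : ∑ i ∈ Finset.univ.erase j, (lam * |Function.update x j z i| + 1/2 * (Function.update x j z i)^2)
      = ∑ i ∈ Finset.univ.erase j, (lam * |x i| + 1/2 * (x i)^2) := by
    refine Finset.sum_congr rfl fun i hi => ?_
    rw [Function.update_of_ne (Finset.ne_of_mem_erase hi)]
  have e2 : ∑ i ∈ Finset.univ.erase j, g i * (Function.update x j z - x) i = 0 := by
    refine Finset.sum_eq_zero fun i hi => ?_
    simp [Function.update_of_ne (Finset.ne_of_mem_erase hi)]
  rw [e1, e2] at h1
  simp only [Function.update_self, Pi.sub_apply] at h1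
  linarith

lemma h_breg_eq {n : ℕ} (lam : ℝ) (g x y : Fin n → ℝ) :
    breg (fun x : Fin n → ℝ => lam * norm1 x + (1 / 2) * enorm2 x ^ 2) g x y =
    ∑ j, ((lam * |y j| + 1/2 * (y j)^2) - (lam * |x j| + 1/2 * (x j)^2) - g j * (y j - x j)) := by
  simp only [breg, h_f_eq, ip, Pi.sub_apply, Finset.sum_sub_distrib]

/-- one step -/
lemma h_step {n : ℕ} {lam : ℝ} {x g : Fin n → ℝ}
    (h : ∀ j w, lam * |w| ≥ lam * |x j| + (g j - x j) * (w - x j)) (a x' y : Fin n → ℝ) (t : ℝ)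
    (ha : ∑ j, (a j)^2 = 1) :
    breg (fun x : Fin n → ℝ => lam * norm1 x + (1 / 2) * enorm2 x ^ 2) (g - t • a) x' y ≤
    breg (fun x : Fin n → ℝ => lam * norm1 x + (1 / 2) * enorm2 x ^ 2) g x y
      - t * ip a (x - y) + t^2 / 2 := by
  have e : t^2/2 = ∑ j, t^2/2 * (a j)^2 := by rw [← Finset.mul_sum, ha, mul_one]
  rw [h_breg_eq, h_breg_eq, e, ip, Finset.mul_sum, ← Finset.sum_sub_distrib,
    ← Finset.sum_add_distrib]
  refine Finset.sum_le_sum fun j _ => ?_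
  have := h j (x' j)
  simp only [Pi.sub_apply, Pi.smul_apply, smul_eq_mul]
  nlinarith [sq_nonneg (x' j - x j + t * a j)]

lemma h_lower {n : ℕ} {lam : ℝ} {x g : Fin n → ℝ}
    (h : ∀ j w, lam * |w| ≥ lam * |x j| + (g j - x j) * (w - x j)) (y : Fin n → ℝ) :
    ∑ j, (x j - y j)^2 ≤ 2 *
    breg (fun x : Fin n → ℝ => lam * norm1 x + (1 / 2) * enorm2 x ^ 2) g x y := by
  rw [h_breg_eq, Finset.mul_sum]
  refine Finset.sum_le_sum fun j _ => ?_
  have := h j (y j)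
  nlinarith

lemma h_scalar_upper {lam g x y μ : ℝ} (hl : 0 < lam) (hμ : 0 ≤ μ) (hy : y ≠ 0 → μ ≤ |y|)
    (h : ∀ w, lam * |w| ≥ lam * |x| + (g - x) * (w - x)) :
    μ * ((lam * |y| + 1/2 * y^2) - (lam * |x| + 1/2 * x^2) - g * (y - x)) ≤
      (μ + 2 * lam) * (x - y)^2 := by
  obtain ⟨p, rfl⟩ : ∃ p, g = x + p := ⟨g - x, by ring⟩
  simp only [add_sub_cancel_left] at h
  have hpx : p * x = lam * |x| := by
    have h0 := h 0
    have h2 := h (2 * x)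
    rw [abs_mul] at h2
    norm_num at h0 h2
    linarith
  have hp : ∀ w, p * w ≤ lam * |w| := fun w => by have := h w; nlinarith
  have hD : (lam * |y| + 1/2 * y^2) - (lam * |x| + 1/2 * x^2) - (x + p) * (y - x)
      = 1/2 * (x - y)^2 + (lam * |y| - p * y) := by nlinarith
  rw [hD]
  have hsq := sq_nonneg (x - y)
  by_cases hy0 : y = 0
  · subst hy0; simp; nlinarith [mul_nonneg hμ (sq_nonneg x), mul_nonneg hl.le (sq_nonneg x)]
  have hyμ := hy hy0
  by_cases hs : 0 < x * y
  · have : lam * |y| - p * y = 0 := by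
      rcases pos_and_pos_or_neg_and_neg_of_mul_pos hs with ⟨h1, h2⟩ | ⟨h1, h2⟩
      · rw [abs_of_pos h1] at hpx; rw [abs_of_pos h2, mul_right_cancel₀ h1.ne' hpx]; ring
      · rw [abs_of_neg h1] at hpx
        have : p = -lam := mul_right_cancel₀ h1.ne (by linarith)
        rw [abs_of_neg h2, this]; ring
    rw [this]
    nlinarith [mul_nonneg hμ hsq, mul_nonneg hl.le hsq]
  · have h1 : -(p * y) ≤ lam * |y| := by have := hp (-y); rw [abs_neg] at this; linarith
    have h2 : |y|^2 ≤ (x - y)^2 := by rw [sq_abs]; nlinarith [sq_nonneg x]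
    have h3 : μ * |y| ≤ (x - y)^2 := by nlinarith [abs_nonneg y]
    have h4 := mul_le_mul_of_nonneg_left h3 hl.le
    have h5 := mul_le_mul_of_nonneg_left h1 hμ
    nlinarith [mul_nonneg hμ hsq]

lemma h_upper {n : ℕ} {lam μ : ℝ} {x g y : Fin n → ℝ} (hl : 0 < lam) (hμ : 0 ≤ μ)
    (hy : ∀ j, y j ≠ 0 → μ ≤ |y j|)
    (h : ∀ j w, lam * |w| ≥ lam * |x j| + (g j - x j) * (w - x j)) :
    μ / (μ + 2 * lam) *
      breg (fun x : Fin n → ℝ => lam * norm1 x + (1 / 2) * enorm2 x ^ 2) g x y ≤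
      ∑ j, (x j - y j)^2 := by
  rw [div_mul_eq_mul_div, div_le_iff₀ (by positivity), h_breg_eq, Finset.mul_sum, Finset.sum_mul]
  refine Finset.sum_le_sum fun j _ => ?_
  rw [mul_comm ((x j - y j)^2)]
  exact h_scalar_upper hl hμ (hy j) (h j)

lemma h_enorm_nonneg {I : Type*} [Fintype I] (v : I → ℝ) : 0 ≤ enorm2 v := Real.sqrt_nonneg _

lemma h_enorm_sq {I : Type*} [Fintype I] (v : I → ℝ) : enorm2 v ^ 2 = ∑ i, (v i)^2 :=
  Real.sq_sqrt (Finset.sum_nonneg fun i _ => sq_nonneg _)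

lemma h_sigmaMax {m n : ℕ} (A : Matrix (Fin m) (Fin n) ℝ) (hrows : ∀ i, enorm2 (A i) = 1)
    (v : Fin n → ℝ) : 0 ≤ sigmaMax A ∧ enorm2 (A.mulVec v) ≤ sigmaMax A * enorm2 v := by
  have hb : ∀ x : Fin n → ℝ, enorm2 (A.mulVec x) ≤ Real.sqrt m * enorm2 x := by
    intro x
    refine abs_le_of_sq_le_sq' ?_ (mul_nonneg (Real.sqrt_nonneg _) (h_enorm_nonneg _)) |>.2
    rw [mul_pow, Real.sq_sqrt (Nat.cast_nonneg _), h_enorm_sq]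
    have : ∀ i ∈ (Finset.univ : Finset (Fin m)), (A.mulVec x i)^2 ≤ enorm2 x ^ 2 := by
      intro i _
      have := Finset.sum_mul_sq_le_sq_mul_sq Finset.univ (A i) x
      rw [← h_enorm_sq, ← h_enorm_sq, hrows i] at this
      simpa [Matrix.mulVec, dotProduct] using this
    simpa using Finset.sum_le_card_nsmul _ _ _ this
  have hbd : BddAbove {r | ∃ x : Fin n → ℝ, x ≠ 0 ∧ r = enorm2 (A.mulVec x) / enorm2 x} := by
    refine ⟨Real.sqrt m, ?_⟩
    rintro r ⟨x, hx, rfl⟩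
    exact div_le_of_le_mul₀ (h_enorm_nonneg _) (Real.sqrt_nonneg _) (hb x)
  refine ⟨Real.sSup_nonneg ?_, ?_⟩
  · rintro r ⟨x, hx, rfl⟩
    exact div_nonneg (h_enorm_nonneg _) (h_enorm_nonneg _)
  · by_cases hv : enorm2 v = 0
    · have := hb v
      rw [hv] at this ⊢; simpa using this
    · have hv' : 0 < enorm2 v := lt_of_le_of_ne (h_enorm_nonneg _) (Ne.symm hv)
      rw [← div_le_iff₀ hv']
      refine le_csSup hbd ⟨v, ?_, rfl⟩
      rintro rfl; simp [enorm2] at hv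

lemma h_sigmaTilde {m n : ℕ} (hn : 0 < n) (A : Matrix (Fin m) (Fin n) ℝ) (I : Finset (Fin m))
    (v : Fin n → ℝ) :
    sigmaTildeQBMin A I.card ^ 2 * ∑ j, (v j)^2 ≤ ∑ i ∈ I, (A.mulVec v i)^2 := by
  have hnn : ∀ J : Finset (Fin n), ∀ I : Finset (Fin m), 0 ≤ sigmaMin (subMat A I J) := by
    intro J I
    refine Real.sInf_nonneg ?_
    rintro r ⟨x, hx, rfl⟩
    exact div_nonneg (h_enorm_nonneg _) (h_enorm_nonneg _)
  have h0 : 0 ≤ sigmaTildeQBMin A I.card := by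
    refine Real.sInf_nonneg ?_
    rintro r ⟨I, J, _, _, rfl⟩
    exact hnn J I
  have h1 : sigmaTildeQBMin A I.card ≤ sigmaMin (subMat A I Finset.univ) := by
    refine csInf_le ⟨0, ?_⟩ ⟨I, Finset.univ, rfl, ⟨⟨0, hn⟩, Finset.mem_univ _⟩, rfl⟩
    rintro r ⟨I, J, _, _, rfl⟩
    exact hnn J I
  set w : {j // j ∈ (Finset.univ : Finset (Fin n))} → ℝ := fun j => v j with hw
  have e1 : ∑ j, (v j)^2 = enorm2 w ^ 2 := by
    rw [h_enorm_sq]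
    exact (Finset.sum_coe_sort Finset.univ (fun j => (v j)^2)).symm
  have e2 : ∑ i ∈ I, (A.mulVec v i)^2 = enorm2 ((subMat A I Finset.univ).mulVec w) ^ 2 := by
    rw [h_enorm_sq, ← Finset.sum_coe_sort I]
    refine Finset.sum_congr rfl fun i _ => ?_
    congr 1
    simp only [Matrix.mulVec, dotProduct, subMat, Matrix.submatrix_apply, hw]
    exact (Finset.sum_coe_sort Finset.univ (fun j => A i j * v j)).symm
  rw [e1, e2, ← mul_pow]
  refine pow_le_pow_left₀ (mul_nonneg h0 (h_enorm_nonneg _)) ?_ 2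
  by_cases hv : enorm2 w = 0
  · rw [hv, mul_zero]; exact h_enorm_nonneg _
  have hv' : 0 < enorm2 w := lt_of_le_of_ne (h_enorm_nonneg _) (Ne.symm hv)
  rw [← le_div_iff₀ hv']
  refine h1.trans (csInf_le ⟨0, ?_⟩ ⟨w, ?_, rfl⟩)
  · rintro r ⟨x, hx, rfl⟩
    exact div_nonneg (h_enorm_nonneg _) (h_enorm_nonneg _)
  · intro h; rw [h] at hv; simp [enorm2] at hv

lemma h_cs {m : ℕ} (S : Finset (Fin m)) (e : Fin m → ℝ) (k E : ℝ) (hk : (S.card : ℝ) ≤ k)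
    (hE : 0 ≤ E) (h : ∑ i, (e i)^2 ≤ E^2) : ∑ i ∈ S, |e i| ≤ Real.sqrt k * E := by
  have hk0 : 0 ≤ k := (Nat.cast_nonneg _).trans hk
  refine abs_le_of_sq_le_sq' ?_ (mul_nonneg (Real.sqrt_nonneg _) hE) |>.2
  rw [mul_pow, Real.sq_sqrt hk0]
  have h1 := sq_sum_le_card_mul_sum_sq (s := S) (f := fun i => |e i|)
  simp only [sq_abs] at h1
  have h2 : ∑ i ∈ S, (e i)^2 ≤ ∑ i, (e i)^2 :=
    Finset.sum_le_sum_of_subset_of_nonneg (Finset.subset_univ _) fun i _ _ => sq_nonneg _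
  calc _ ≤ _ := h1
    _ ≤ k * E^2 := mul_le_mul hk (h2.trans h) (Finset.sum_nonneg fun i _ => sq_nonneg _) hk0

/-- final algebra, in terms of the square roots `a = √β`, `c = √(1-β)`, `M = √m`, `N = √n`. -/
lemma h_final {a c M N q g s d D R Q τ X : ℝ} (ha : 0 ≤ a) (hc : 0 ≤ c) (hM : 0 < M) (hN : 0 < N)
    (hq : 0 < q) (hg : 0 < g) (hs : 0 ≤ s) (hd : 0 ≤ d) (hR : 0 ≤ R) (hQ : 0 ≤ Q)
    (hτ : 0 ≤ τ) (hdD : d^2 ≤ 2 * D)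
    (hQb : g * M^2 * Q ≤ c * M * (s * d) + c^2 * M^2 * R)
    (hX : X ≤ q * M^2 * D + q * M^2 * R^2 / 2 - τ * D / 2 + Q * (a * M * (s * d))
      + a^2 * M^2 * Q^2 / 2) :
    1 / (q * M^2) * X ≤ (1 - (τ * (q - a^2) / (2 * q^2) / M^2
        - (2 * (a * c) / (q * g)) * (s^2 / M^2 + c * s / (M * N))
        - (a^2 * c^2 / (q * g^2)) * (s^2 / M^2 + 2 * c * s / (M * N)))) * D
      + ((a * c^2 / (q * g)) * (1 + a * c / g) * (N / M) * s
        + 1 / 2 * (a^2 * (c^2)^2 / (q * g^2)) + 1 / 2) * R^2 := by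
  have hD : 0 ≤ D := by nlinarith [sq_nonneg d]
  set P := c * (s * d) / (g * M) + c^2 * R / g with hP
  have hP0 : 0 ≤ P := by positivity
  have hQP : Q ≤ P := by
    have : g * M^2 * Q ≤ g * M^2 * P := by
      refine hQb.trans (le_of_eq ?_)
      rw [hP]; field_simp
    exact le_of_mul_le_mul_left this (by positivity)
  have hdR : d * R ≤ D / N + N * R^2 / 2 := by
    have : N * (d * R) ≤ N * (D / N + N * R^2/2) := by
      have e : N * (D / N + N * R^2/2) = D + N^2 * R^2/2 := by field_simp
      rw [e]; nlinarith [sq_nonneg (d - N * R)]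
    exact le_of_mul_le_mul_left this hN
  have hX2 : X ≤ q * M^2 * D + q * M^2 * R^2 / 2 - τ * D / 2 + P * (a * M * (s * d))
      + a^2 * M^2 * P^2 / 2 := by
    have h1 : Q * (a * M * (s * d)) ≤ P * (a * M * (s * d)) :=
      mul_le_mul_of_nonneg_right hQP (by positivity)
    have h2 : a^2 * M^2 * Q^2 ≤ a^2 * M^2 * P^2 := by gcongr
    linarith
  have hX3 : 1 / (q * M^2) * X ≤ 1 / (q * M^2) * (q * M^2 * D + q * M^2 * R^2 / 2 - τ * D / 2
      + P * (a * M * (s * d)) + a^2 * M^2 * P^2 / 2) :=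
    mul_le_mul_of_nonneg_left hX2 (by positivity)
  refine hX3.trans ?_
  have e1 : 1 / (q * M^2) * (q * M^2 * D + q * M^2 * R^2 / 2 - τ * D / 2
      + P * (a * M * (s * d)) + a^2 * M^2 * P^2 / 2) =
      D + R^2 / 2 - τ * D / (2 * q * M^2)
      + (a * c / (q * g) * (s^2 / M^2) + a^2 * c^2 / (2 * q * g^2) * (s^2 / M^2)) * d^2
      + (a * c^2 / (q * g) * (s / M) + a^2 * c^3 / (q * g^2) * (s / M)) * (d * R)
      + a^2 * c^4 / (2 * q * g^2) * R^2 := by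
    rw [hP]; field_simp; ring
  have e2 : (1 - (τ * (q - a^2) / (2 * q^2) / M^2
        - (2 * (a * c) / (q * g)) * (s^2 / M^2 + c * s / (M * N))
        - (a^2 * c^2 / (q * g^2)) * (s^2 / M^2 + 2 * c * s / (M * N)))) * D
      + ((a * c^2 / (q * g)) * (1 + a * c / g) * (N / M) * s
        + 1 / 2 * (a^2 * (c^2)^2 / (q * g^2)) + 1 / 2) * R^2 =
      D + R^2 / 2 - τ * D / (2 * q * M^2) + τ * D * a^2 / (2 * q^2 * M^2)
      + (a * c / (q * g) * (s^2 / M^2) + a^2 * c^2 / (2 * q * g^2) * (s^2 / M^2)) * (2 * D)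
      + (a * c^2 / (q * g) * (s / M) + a^2 * c^3 / (q * g^2) * (s / M)) * (2 * (D / N + N * R^2 / 2))
      + a^2 * c^4 / (2 * q * g^2) * R^2 := by
    field_simp; ring
  rw [e1, e2]
  have t1 : 0 ≤ τ * D * a^2 / (2 * q^2 * M^2) := by positivity
  have t2 := mul_le_mul_of_nonneg_left hdD
    (by positivity : 0 ≤ a * c / (q * g) * (s^2 / M^2) + a^2 * c^2 / (2 * q * g^2) * (s^2 / M^2))
  have t3 : d * R ≤ 2 * (D / N + N * R^2 / 2) := by
    have : 0 ≤ D / N + N * R^2 / 2 := by positivity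
    linarith
  have t4 := mul_le_mul_of_nonneg_left t3
    (by positivity : 0 ≤ a * c^2 / (q * g) * (s / M) + a^2 * c^3 / (q * g^2) * (s / M))
  linarith

lemma h_final_sqrt {β m n q s d D R Q α T X : ℝ} (hβ0 : 0 ≤ β) (hβ1 : 0 ≤ 1 - β)
    (hm : 0 < m) (hn : 0 < n)
    (hq : 0 < q) (hg : 0 < 1 - β - q) (hs : 0 ≤ s) (hd : 0 ≤ d) (hR : 0 ≤ R)
    (hQ : 0 ≤ Q) (hα : 0 ≤ α) (hdD : d^2 ≤ 2 * D)
    (hQb : (1 - β - q) * m * Q ≤ Real.sqrt ((1 - β) * m) * (s * d) + (1 - β) * m * R)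
    (hX : X ≤ q * m * D + q * m * R^2 / 2 - α * T^2 * D / 2
      + Q * (Real.sqrt (β * m) * (s * d)) + β * m * Q^2 / 2) :
    1 / (q * m) * X ≤ (1 - (α * (q - β) / (2 * q ^ 2) * T ^ 2 / m -
        (2 * Real.sqrt (β * (1 - β)) / (q * (1 - β - q))) *
          (s ^ 2 / m + Real.sqrt (1 - β) * s / Real.sqrt (m * n)) -
        (β * (1 - β) / (q * (1 - β - q) ^ 2)) *
          (s ^ 2 / m + 2 * Real.sqrt (1 - β) * s / Real.sqrt (m * n)))) * D +
      ((Real.sqrt β * (1 - β) / (q * (1 - β - q))) *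
          (1 + Real.sqrt (β * (1 - β)) / (1 - β - q)) * Real.sqrt (n / m) * s +
        (1 / 2) * (β * (1 - β) ^ 2 / (q * (1 - β - q) ^ 2)) + 1 / 2) * R ^ 2 := by
  have hfin := h_final (a := Real.sqrt β) (c := Real.sqrt (1 - β)) (M := Real.sqrt m)
    (N := Real.sqrt n) (q := q) (g := 1 - β - q) (s := s) (d := d) (D := D) (R := R)
    (Q := Q) (τ := α * T ^ 2) (X := X)
    (Real.sqrt_nonneg _) (Real.sqrt_nonneg _) (Real.sqrt_pos.2 hm) (Real.sqrt_pos.2 hn) hq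
    hg hs hd hR hQ (by positivity) hdD
    (by rw [Real.sq_sqrt hm.le, Real.sq_sqrt hβ1, ← Real.sqrt_mul hβ1]; exact hQb)
    (by rw [Real.sq_sqrt hm.le, Real.sq_sqrt hβ0, ← Real.sqrt_mul hβ0]; exact hX)
  rw [Real.sq_sqrt hm.le, Real.sq_sqrt hβ0, Real.sq_sqrt hβ1, ← Real.sqrt_mul hβ0,
    ← Real.sqrt_mul hm.le, ← Real.sqrt_div hn.le] at hfin
  have e : α * (q - β) / (2 * q ^ 2) * T ^ 2 / m = α * T ^ 2 * (q - β) / (2 * q ^ 2) / m := by ring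
  rw [e]
  exact hfin

set_option maxHeartbeats 1000000 in
/-- one-step expectation bound for Quantile-RaSK with inexact step,
Theorem 3.2(a). -/
theorem stmt10 {m n : ℕ} (lam : ℝ) (hlam : 0 < lam)
    (f : (Fin n → ℝ) → ℝ)
    (hf : f = fun x => lam * norm1 x + (1 / 2) * enorm2 x ^ 2)
    (A : Matrix (Fin m) (Fin n) ℝ)
    (hrank : A.rank = min m n) (hrows : ∀ i, enorm2 (A i) = 1)
    (q β : ℝ) (hβq : β < q) (hq : q < 1 - β)
    (kq kb kqb : ℕ)
    (hkq : (kq : ℝ) = q * m) (hkb : (kb : ℝ) = β * m) (hkqb : (kqb : ℝ) = (q - β) * m)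
    (xhat : Fin n → ℝ) (hAx : A.mulVec xhat ≠ 0)
    (hmin : ∀ z, A.mulVec z = A.mulVec xhat → z ≠ xhat → f xhat < f z)
    (bc r : Fin m → ℝ)
    (hbc : (Finset.univ.filter (fun i => bc i ≠ 0)).card = kb)
    (b : Fin m → ℝ) (hb : b = A.mulVec xhat + bc + r)
    (αc : ℝ) (hαc : αc = xminOf xhat / (xminOf xhat + 2 * lam))
    -- condition (♦)
    (hcond :
      (2 * Real.sqrt (β * (1 - β)) / (1 - β - q)) *
          (sigmaMax A + Real.sqrt ((1 - β) * m / n)) +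
        (β * (1 - β) / (1 - β - q) ^ 2) *
          (sigmaMax A + 2 * Real.sqrt ((1 - β) * m / n)) <
      (αc * (q - β) / (2 * q)) * (sigmaTildeQBMin A kqb) ^ 2 / sigmaMax A)
    (x xs : Fin n → ℝ) (hxs : xs ∈ subdiff f x)
    (hrange : ∃ u : Fin m → ℝ, xs = A.transpose.mulVec u)
    (Q : ℝ) (hQ : Q = quantileAt kq (fun i => |ip (A i) x - b i|))
    (N2 : Finset (Fin m)) (hN2 : N2 = Finset.univ.filter (fun i => |ip (A i) x - b i| ≤ Q))
    (hN2card : N2.card = kq)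
    (xs' x' : Fin m → (Fin n → ℝ))
    (hxs' : ∀ i ∈ N2, xs' i = xs - (ip (A i) x - b i) • A i)
    (hx' : ∀ i ∈ N2, x' i = softShrink lam (xs' i))
    (C1 C2 : ℝ)
    (hC1 : C1 = (αc * (q - β) / (2 * q ^ 2)) * (sigmaTildeQBMin A kqb) ^ 2 / m -
        (2 * Real.sqrt (β * (1 - β)) / (q * (1 - β - q))) *
          ((sigmaMax A) ^ 2 / m + Real.sqrt (1 - β) * sigmaMax A / Real.sqrt (m * n)) -
        (β * (1 - β) / (q * (1 - β - q) ^ 2)) *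
          ((sigmaMax A) ^ 2 / m + 2 * Real.sqrt (1 - β) * sigmaMax A / Real.sqrt (m * n)))
    (hC2 : C2 = (Real.sqrt β * (1 - β) / (q * (1 - β - q))) *
          (1 + Real.sqrt (β * (1 - β)) / (1 - β - q)) * Real.sqrt (n / m) * sigmaMax A +
        (1 / 2) * (β * (1 - β) ^ 2 / (q * (1 - β - q) ^ 2)) + 1 / 2) :
    (1 / (q * m)) * ∑ i ∈ N2, breg f (xs' i) (x' i) xhat ≤
      (1 - C1) * breg f xs x xhat + C2 * normInf r ^ 2 := by
  have hsub : ∀ j w, lam * |w| ≥ lam * |x j| + (xs j - x j) * (w - x j) := by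
    subst hf; exact fun j w => h_comp_sub hlam hxs j w
  have hm : 0 < m := by
    rcases Nat.eq_zero_or_pos m with rfl | h
    · exact absurd (Subsingleton.elim _ _) hAx
    · exact h
  have hn : 0 < n := by
    rcases Nat.eq_zero_or_pos n with rfl | h
    · exfalso; apply hAx; ext i; simp [Matrix.mulVec, dotProduct]
    · exact h
  have hmR : (0:ℝ) < m := by exact_mod_cast hm
  have hnR : (0:ℝ) < n := by exact_mod_cast hn
  have hβ0 : 0 ≤ β := by
    by_contra! h
    have : (0:ℝ) ≤ kb := Nat.cast_nonneg _
    nlinarith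
  have hq0 : 0 < q := by linarith
  have hg : 0 < 1 - β - q := by linarith
  have hβ1 : 0 ≤ 1 - β := by linarith
  set R := normInf r with hR
  have hRi : ∀ i, |r i| ≤ R := fun i => le_ciSup (f := fun i => |r i|) (Set.finite_range _).bddAbove i
  have hR0 : 0 ≤ R := (abs_nonneg _).trans (hRi ⟨0, hm⟩)
  set e : Fin m → ℝ := fun i => ip (A i) (x - xhat) with he
  have heA : ∀ i, A.mulVec (x - xhat) i = e i := fun i => rfl
  have ht : ∀ i, ip (A i) x - b i = e i - bc i - r i := by
    intro i
    have : A.mulVec xhat i = ip (A i) xhat := rfl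
    have h2 : e i = ip (A i) x - ip (A i) xhat := by
      simp only [he, ip, ← Finset.sum_sub_distrib, Pi.sub_apply, mul_sub]
    rw [hb, h2]; simp only [Pi.add_apply, this]; ring
  set d := enorm2 (x - xhat) with hd
  have hd2 : d^2 = ∑ j, (x j - xhat j)^2 := h_enorm_sq _
  obtain ⟨hs0, hsv⟩ := h_sigmaMax A hrows (x - xhat)
  rw [← hd] at hsv
  have hd0 : 0 ≤ d := h_enorm_nonneg _
  have hE : ∑ i, (e i)^2 ≤ (sigmaMax A * d)^2 := by
    have := pow_le_pow_left₀ (h_enorm_nonneg _) hsv 2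
    rw [h_enorm_sq] at this
    simpa only [heA] using this
  have hE0 : 0 ≤ sigmaMax A * d := mul_nonneg hs0 hd0
  set Cc := Finset.univ.filter (fun i => bc i ≠ 0) with hCc
  set S := N2 ∩ Cc with hS
  have hScard : (S.card : ℝ) ≤ β * m := by
    rw [← hkb, ← hbc]; exact_mod_cast Finset.card_le_card Finset.inter_subset_right
  have hkq0 : 0 < kq := by
    have : (0:ℝ) < kq := by rw [hkq]; positivity
    exact_mod_cast this
  have hmemN2 : ∀ i, i ∈ N2 ↔ |e i - bc i - r i| ≤ Q := by
    intro i; rw [hN2]; simp [ht]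
  have hQ0 : 0 ≤ Q := by
    obtain ⟨i, hi⟩ := Finset.card_pos.1 (hN2card ▸ hkq0)
    exact (abs_nonneg _).trans ((hmemN2 i).1 hi)
  -- quantile bound
  set U := (N2 ∪ Cc)ᶜ with hU
  have hUc1 : (1 - β - q) * m ≤ (U.card : ℝ) := by
    have h1 : (N2 ∪ Cc).card ≤ kq + kb := by
      rw [← hN2card, ← hbc]; exact Finset.card_union_le _ _
    have h2 : (N2 ∪ Cc).card + U.card = m := by
      rw [hU, Finset.card_add_card_compl, Fintype.card_fin]
    have h3 : (m : ℝ) ≤ kq + kb + U.card := by exact_mod_cast (by omega : m ≤ kq + kb + U.card)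
    rw [hkq, hkb] at h3; linarith
  have hUc2 : (U.card : ℝ) ≤ (1 - β) * m := by
    have h1 : U.card ≤ Ccᶜ.card :=
      Finset.card_le_card (Finset.compl_subset_compl.2 Finset.subset_union_right)
    have h2 : Cc.card + Ccᶜ.card = m := by
      rw [Finset.card_add_card_compl, Fintype.card_fin]
    have h3 : (U.card : ℝ) + kb ≤ m := by
      rw [hbc] at h2
      exact_mod_cast (by omega : U.card + kb ≤ m)
    rw [hkb] at h3; linarith
  have hQb : (1 - β - q) * m * Q ≤ Real.sqrt ((1 - β) * m) * (sigmaMax A * d)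
      + (1 - β) * m * R := by
    have h1 : (U.card : ℝ) * Q ≤ ∑ i ∈ U, (|e i| + R) := by
      rw [← nsmul_eq_mul]
      refine Finset.card_nsmul_le_sum _ _ _ fun i hi => ?_
      rw [hU, Finset.mem_compl, Finset.mem_union, not_or] at hi
      have hbi : bc i = 0 := by simpa [hCc] using hi.2
      have h2 := lt_of_not_ge (fun h => hi.1 ((hmemN2 i).2 h))
      rw [hbi, sub_zero] at h2
      have h3 := abs_sub (e i) (r i)
      have h4 := hRi i
      linarith
    rw [Finset.sum_add_distrib, Finset.sum_const, nsmul_eq_mul] at h1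
    have h2 := h_cs U e _ _ hUc2 hE0 hE
    have h3 := mul_le_mul_of_nonneg_right hUc1 hQ0
    have h4 := mul_le_mul_of_nonneg_right hUc2 hR0
    linarith
  -- per step bound
  set D := breg f xs x xhat with hD
  have hdD : d^2 ≤ 2 * D := by
    rw [hd2, hD, hf]; exact h_lower hsub xhat
  have hstep : ∀ i ∈ N2, breg f (xs' i) (x' i) xhat ≤
      D - (e i - bc i - r i) * e i + (e i - bc i - r i)^2 / 2 := by
    intro i hi
    rw [hxs' i hi, ht i, hD, hf]
    refine h_step hsub (A i) (x' i) xhat _ ?_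
    rw [← h_enorm_sq, hrows i]; norm_num
  set G := N2 \ Cc with hG
  have hsplit : ∀ F : Fin m → ℝ, ∑ i ∈ N2, F i = ∑ i ∈ S, F i + ∑ i ∈ G, F i := fun F =>
    (Finset.sum_inter_add_sum_sdiff N2 Cc F).symm
  have hGS : (S.card : ℝ) + G.card = q * m := by
    rw [← hkq, ← hN2card]; exact_mod_cast Finset.card_inter_add_card_sdiff N2 Cc
  have hGk : kqb ≤ G.card := by
    have : (kqb : ℝ) ≤ G.card := by rw [hkqb]; linarith
    exact_mod_cast this
  obtain ⟨I, hIG, hIc⟩ := Finset.exists_subset_card_eq hGk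
  have hsig := h_sigmaTilde hn A I (x - xhat)
  rw [hIc] at hsig
  simp only [heA, Pi.sub_apply] at hsig
  rw [← hd2] at hsig
  have hIsum : ∑ i ∈ I, (e i)^2 ≤ ∑ i ∈ G, (e i)^2 :=
    Finset.sum_le_sum_of_subset_of_nonneg hIG fun i _ _ => sq_nonneg _
  have hμ0 : 0 ≤ xminOf xhat := by
    refine Real.sInf_nonneg ?_
    rintro r ⟨j, _, rfl⟩; exact abs_nonneg _
  have hμ : ∀ j, xhat j ≠ 0 → xminOf xhat ≤ |xhat j| := by
    intro j hj
    refine csInf_le ⟨0, ?_⟩ ⟨j, hj, rfl⟩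
    rintro r ⟨j, _, rfl⟩; exact abs_nonneg _
  have hα0 : 0 ≤ αc := by rw [hαc]; positivity
  have hαD : αc * D ≤ d^2 := by
    rw [hαc, hd2, hD, hf]; exact h_upper hlam hμ0 hμ hsub
  have hmain : αc * sigmaTildeQBMin A kqb ^ 2 * D ≤ ∑ i ∈ G, (e i)^2 := by
    have := mul_le_mul_of_nonneg_left hαD (sq_nonneg (sigmaTildeQBMin A kqb))
    linarith
  have hXG : ∑ i ∈ G, breg f (xs' i) (x' i) xhat ≤
      G.card * (D + R^2/2) - (∑ i ∈ G, (e i)^2) / 2 := by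
    rw [Finset.sum_div, ← nsmul_eq_mul, ← Finset.sum_const, ← Finset.sum_sub_distrib]
    refine Finset.sum_le_sum fun i hi => ?_
    have hi' := Finset.mem_sdiff.1 hi
    have hbi : bc i = 0 := by simpa [hCc] using hi'.2
    have h1 := hstep i hi'.1
    rw [hbi] at h1
    have h2 : (r i)^2 ≤ R^2 := sq_le_sq' (abs_le.1 (hRi i)).1 (abs_le.1 (hRi i)).2
    nlinarith
  have hXS : ∑ i ∈ S, breg f (xs' i) (x' i) xhat ≤
      S.card * (D + Q^2/2) + Q * ∑ i ∈ S, |e i| := by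
    rw [Finset.mul_sum, ← nsmul_eq_mul, ← Finset.sum_const, ← Finset.sum_add_distrib]
    refine Finset.sum_le_sum fun i hi => ?_
    have hi' := Finset.mem_inter.1 hi
    have h1 := hstep i hi'.1
    have h3 := (hmemN2 i).1 hi'.1
    have h2 : (e i - bc i - r i)^2 ≤ Q^2 := sq_le_sq' (abs_le.1 h3).1 (abs_le.1 h3).2
    have h4 : -((e i - bc i - r i) * e i) ≤ Q * |e i| := by
      refine (neg_le_abs _).trans ?_
      rw [abs_mul]; exact mul_le_mul_of_nonneg_right h3 (abs_nonneg _)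
    linarith
  have hSe := h_cs S e _ _ hScard hE0 hE
  have hX : ∑ i ∈ N2, breg f (xs' i) (x' i) xhat ≤ q * m * D + q * m * R^2 / 2
      - αc * sigmaTildeQBMin A kqb ^ 2 * D / 2 + Q * (Real.sqrt (β * m) * (sigmaMax A * d))
      + β * m * Q^2 / 2 := by
    rw [hsplit]
    have h1 := mul_le_mul_of_nonneg_left hSe hQ0
    have h2 := mul_le_mul_of_nonneg_right hScard (sq_nonneg Q)
    have h3 : (G.card : ℝ) * R^2 ≤ q * m * R^2 :=
      mul_le_mul_of_nonneg_right (by linarith [(Nat.cast_nonneg S.card : (0:ℝ) ≤ S.card)])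
        (sq_nonneg R)
    have h4 : (S.card : ℝ) * D + G.card * D = q * m * D := by rw [← hGS]; ring
    linarith
  rw [hC1, hC2]
  exact h_final_sqrt hβ0 hβ1 hmR hnR hq0 hg hs0 hd0 hR0 hQ0 hα0 hdD hQb hX
end

section
/- One-step expectation bound for Quantile-RaSK in the corrupted (noiseless) case (Theorem 3.3(a)): let λ > 0, f(x) = λ‖x‖₁ + (1/2)‖x‖², let A ∈ ℝ^{m×n} be full rank with unit-norm rows a_1ᵀ, …, a_mᵀ, let b = A x̂ + b^c where b^c has exactly βm nonzero entries, A x̂ ≠ 0, and x̂ is the unique solution of min_x f(x) subject to A x = A x̂; assume β < q < 1 − β with qm, βm integers, and that (2q/(q−β))·(2√β/√(1−q−β) + β/(1−q−β))·((|x̂|_min + 2λ)/|x̂|_min) < σ̃_{q−β,min}(A)²/σ_max(A)². Let x ∈ ℝ^n with x* ∈ ∂f(x) ∩ Range(Aᵀ), Q the q-quantile of (|⟨a_i, x⟩ − b_i|)_{i=1}^m, N₂ = {i : |⟨a_i, x⟩ − b_i| ≤ Q} with |N₂| = qm, and for i ∈ N₂ set x_i'* = x* − (⟨a_i, x⟩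 − b_i)·a_i, x_i' = S_λ(x_i'*). Then C > 0 and (1/(qm))·Σ_{i ∈ N₂} D_f^{x_i'*}(x_i', x̂) ≤ (1 − C)·D_f^{x*}(x, x̂), where C = ((q−β)/(2q²m))·(|x̂|_min/(|x̂|_min + 2λ))·σ̃_{q−β,min}(A)² − (1/(qm))·(2√β/√(1−q−β) + β/(1−q−β))·σ_max(A)². -/
lemma aux_scalar (lam a g : ℝ) (hlam : 0 < lam)
    (h : ∀ t, 0 ≤ lam * |t| + 1 / 2 * t ^ 2 - (lam * |a| + 1 / 2 * a ^ 2) - g * (t - a)) :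
    (∀ u, (g - a) * u ≤ lam * |u|) ∧ (g - a) * a = lam * |a| := by
  have key : ∀ u, 0 ≤ lam * |u| - lam * |a| - (g - a) * (u - a) := by
    intro u
    by_contra hneg
    push Not at hneg
    set w := lam * |u| - lam * |a| - (g - a) * (u - a) with hw
    set c := (u - a) ^ 2 with hc
    have hc0 : 0 ≤ c := sq_nonneg _
    have hlin : ∀ e, 0 < e → e ≤ 1 → 0 ≤ w + e / 2 * c := by
      intro e he0 he1
      have h1 := h (a + e * (u - a))
      have h2 : |a + e * (u - a)| ≤ (1 - e) * |a| + e * |u| := by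
        have : a + e * (u - a) = (1 - e) * a + e * u := by ring
        rw [this]
        refine (abs_add_le _ _).trans ?_
        rw [abs_mul, abs_mul, abs_of_nonneg (by linarith : 0 ≤ 1 - e), abs_of_pos he0]
      have h3 := mul_le_mul_of_nonneg_left h2 hlam.le
      have h4 : 0 ≤ e * (w + e / 2 * c) := by
        rw [hw, hc]; nlinarith
      exact nonneg_of_mul_nonneg_right h4 he0
    have hd : 0 < c - w := by linarith
    have he := hlin (-w / (c - w)) (div_pos (by linarith) hd)
      ((div_le_one hd).2 (by linarith))
    have h5 : -w / (c - w) * c ≤ -w := by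
      rw [div_mul_eq_mul_div, div_le_iff₀ hd]; nlinarith
    nlinarith
  have h0 := key 0
  have h2 := key (2 * a)
  rw [abs_mul, abs_two] at h2
  rw [abs_zero] at h0
  have e : (g - a) * a = lam * |a| := by nlinarith
  refine ⟨fun u => ?_, e⟩
  have := key u
  nlinarith

lemma aux_breg {n : ℕ} (lam : ℝ) (f : (Fin n → ℝ) → ℝ)
    (hf : f = fun x => lam * norm1 x + (1 / 2) * enorm2 x ^ 2) (g x y : Fin n → ℝ) :
    breg f g x y = ∑ i, (lam * |y i| + 1 / 2 * (y i) ^ 2 - (lam * |x i| + 1 / 2 * (x i) ^ 2)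
      - g i * (y i - x i)) := by
  have hs : ∀ z : Fin n → ℝ, enorm2 z ^ 2 = ∑ i, (z i) ^ 2 := fun z =>
    Real.sq_sqrt (Finset.sum_nonneg fun i _ => sq_nonneg _)
  simp only [breg, hf, hs, norm1, ip, Finset.sum_sub_distrib, Finset.sum_add_distrib,
    Finset.mul_sum, Pi.sub_apply]

lemma aux_comp {n : ℕ} (lam : ℝ) (hlam : 0 < lam) (f : (Fin n → ℝ) → ℝ)
    (hf : f = fun x => lam * norm1 x + (1 / 2) * enorm2 x ^ 2) (g x : Fin n → ℝ)
    (hg : g ∈ subdiff f x) (j : Fin n) :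
    (∀ u, (g j - x j) * u ≤ lam * |u|) ∧ (g j - x j) * x j = lam * |x j| := by
  apply aux_scalar _ _ _ hlam
  intro t
  have h1 := hg (Function.update x j t)
  have h2 : 0 ≤ breg f g x (Function.update x j t) := by unfold breg; linarith
  rw [aux_breg lam f hf, Finset.sum_eq_single j] at h2
  · simpa using h2
  · intro i _ hij
    simp [Function.update_of_ne hij]
  · simp

/-- strong convexity -/
lemma aux_strong {n : ℕ} (lam : ℝ) (hlam : 0 < lam) (f : (Fin n → ℝ) → ℝ)
    (hf : f = fun x => lam * norm1 x + (1 / 2) * enorm2 x ^ 2) (g x : Fin n → ℝ)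
    (hg : g ∈ subdiff f x) (y : Fin n → ℝ) :
    1 / 2 * ∑ i, (x i - y i) ^ 2 ≤ breg f g x y := by
  rw [aux_breg lam f hf, Finset.mul_sum]
  refine Finset.sum_le_sum fun i _ => ?_
  obtain ⟨h1, h2⟩ := aux_comp lam hlam f hf g x hg i
  have := h1 (y i)
  nlinarith

/-- upper bound for the Bregman distance -/
lemma aux_upper {n : ℕ} (lam : ℝ) (hlam : 0 < lam) (f : (Fin n → ℝ) → ℝ)
    (hf : f = fun x => lam * norm1 x + (1 / 2) * enorm2 x ^ 2) (g x : Fin n → ℝ)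
    (hg : g ∈ subdiff f x) (y : Fin n → ℝ) (p : ℝ) (hp : 0 < p)
    (hy : ∀ j, y j ≠ 0 → p ≤ |y j|) :
    p * breg f g x y ≤ (p + 2 * lam) * ∑ i, (x i - y i) ^ 2 := by
  rw [aux_breg lam f hf, Finset.mul_sum, Finset.mul_sum]
  refine Finset.sum_le_sum fun i _ => ?_
  obtain ⟨h1, h2⟩ := aux_comp lam hlam f hf g x hg i
  have e : lam * |y i| + 1 / 2 * (y i) ^ 2 - (lam * |x i| + 1 / 2 * (x i) ^ 2)
      - g i * (y i - x i) = 1 / 2 * (x i - y i) ^ 2 + (lam * |y i| - (g i - x i) * y i) := by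
    linarith
  rw [e]
  have hs1 : g i - x i ≤ lam := by simpa using h1 1
  have hs2 : -(g i - x i) ≤ lam := by simpa using h1 (-1)
  have main : p * (lam * |y i| - (g i - x i) * y i) ≤ 2 * lam * (x i - y i) ^ 2 := by
    by_cases hy0 : y i = 0
    · rw [hy0]; simp; positivity
    have hpy := hy i hy0
    have gen : y i ^ 2 ≤ (x i - y i) ^ 2 →
        p * (lam * |y i| - (g i - x i) * y i) ≤ 2 * lam * (x i - y i) ^ 2 := by
      intro hsq
      have h3 : lam * |y i| - (g i - x i) * y i ≤ 2 * lam * |y i| := by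
        have := h1 (-(y i)); rw [abs_neg] at this; linarith
      have h4 : p * (lam * |y i| - (g i - x i) * y i) ≤ p * (2 * lam * |y i|) :=
        mul_le_mul_of_nonneg_left h3 hp.le
      have h5 : p * (2 * lam * |y i|) ≤ |y i| * (2 * lam * |y i|) :=
        mul_le_mul_of_nonneg_right hpy (by positivity)
      have h6 : |y i| * (2 * lam * |y i|) = 2 * lam * y i ^ 2 := by
        rw [← sq_abs (y i)]; ring
      nlinarith
    rcases le_or_gt (x i * y i) 0 with hxy | hxy
    · apply gen; nlinarith [sq_nonneg (x i)]
    · have hz : lam * |y i| - (g i - x i) * y i = 0 := by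
        rcases lt_or_gt_of_ne hy0 with hneg | hpos
        · have hx : x i < 0 := by nlinarith
          rw [abs_of_neg hx] at h2
          rw [abs_of_neg hneg]
          have : g i - x i = -lam := by
            apply mul_right_cancel₀ hx.ne; linarith
          rw [this]; ring
        · have hx : 0 < x i := by nlinarith
          rw [abs_of_pos hx] at h2
          rw [abs_of_pos hpos]
          have : g i - x i = lam := by
            apply mul_right_cancel₀ hx.ne'; linarith
          rw [this]; ring
      rw [hz, mul_zero]; positivity
  have : 0 ≤ p * (x i - y i) ^ 2 := by positivity
  linarith

/-- one step -/
lemma aux_step {n : ℕ} (lam : ℝ) (hlam : 0 < lam) (f : (Fin n → ℝ) → ℝ)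
    (hf : f = fun x => lam * norm1 x + (1 / 2) * enorm2 x ^ 2) (g x : Fin n → ℝ)
    (hg : g ∈ subdiff f x) (a y z : Fin n → ℝ) (ha : ∑ i, a i ^ 2 = 1) (t : ℝ) :
    breg f (g - t • a) z y ≤ breg f g x y - t * ip a (x - y) + t ^ 2 / 2 := by
  have h1 := aux_strong lam hlam f hf g x hg z
  have e : breg f (g - t • a) z y = breg f g x y - breg f g x z - t * ip a (x - y)
      + t * ip a (x - z) := by
    have : ip (g - t • a) (y - z) = ip g (y - x) - ip g (z - x) + t * ip a (x - y)
        - t * ip a (x - z) := by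
      simp only [ip, Finset.mul_sum, ← Finset.sum_sub_distrib, ← Finset.sum_add_distrib]
      refine Finset.sum_congr rfl fun i _ => ?_
      simp; ring
    unfold breg; rw [this]; ring
  have h2 : t * ip a (x - z) ≤ 1 / 2 * ∑ i, (x i - z i) ^ 2 + t ^ 2 / 2 := by
    have : t ^ 2 / 2 = ∑ i, t ^ 2 / 2 * a i ^ 2 := by rw [← Finset.mul_sum, ha, mul_one]
    rw [this, ip, Finset.mul_sum, Finset.mul_sum, ← Finset.sum_add_distrib]
    refine Finset.sum_le_sum fun i _ => ?_
    simp only [Pi.sub_apply]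
    nlinarith [sq_nonneg (t * a i - (x i - z i))]
  rw [e]; linarith

lemma aux_row {n : ℕ} (a v : Fin n → ℝ) (ha : ∑ i, a i ^ 2 = 1) :
    ip a v ^ 2 ≤ ∑ i, v i ^ 2 := by
  have := Finset.sum_mul_sq_le_sq_mul_sq Finset.univ a v
  rw [ha, one_mul] at this
  exact this

lemma aux_enorm_sq {I : Type*} [Fintype I] (z : I → ℝ) : enorm2 z ^ 2 = ∑ i, (z i) ^ 2 :=
  Real.sq_sqrt (Finset.sum_nonneg fun i _ => sq_nonneg _)

lemma aux_enorm_pos {I : Type*} [Fintype I] (z : I → ℝ) (hz : z ≠ 0) : 0 < enorm2 z := by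
  obtain ⟨i, hi⟩ := Function.ne_iff.1 hz
  apply Real.sqrt_pos.2
  exact Finset.sum_pos' (fun _ _ => sq_nonneg _) ⟨i, Finset.mem_univ _, by
    have : z i ≠ 0 := hi
    positivity⟩

lemma aux_sigmaMax {m n : ℕ} (A : Matrix (Fin m) (Fin n) ℝ) (ha : ∀ i, ∑ j, A i j ^ 2 = 1)
    (v : Fin n → ℝ) :
    ∑ i, ip (A i) v ^ 2 ≤ sigmaMax A ^ 2 * ∑ j, v j ^ 2 := by
  have hmv : ∀ w : Fin n → ℝ, enorm2 (A.mulVec w) ^ 2 = ∑ i, ip (A i) w ^ 2 := fun w => by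
    rw [aux_enorm_sq]; rfl
  by_cases hv : v = 0
  · subst hv; simp [ip]
  have hpos := aux_enorm_pos v hv
  have hle : enorm2 (A.mulVec v) / enorm2 v ≤ sigmaMax A := by
    apply le_csSup
    · refine ⟨Real.sqrt m, ?_⟩
      rintro r ⟨w, hw, rfl⟩
      have hwp := aux_enorm_pos w hw
      rw [div_le_iff₀ hwp]
      apply (sq_le_sq₀ (a := enorm2 (A.mulVec w)) (Real.sqrt_nonneg _) (by positivity)).1
      rw [hmv, mul_pow, Real.sq_sqrt (Nat.cast_nonneg m), aux_enorm_sq]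
      calc ∑ i, ip (A i) w ^ 2 ≤ ∑ _i : Fin m, ∑ j, w j ^ 2 :=
            Finset.sum_le_sum fun i _ => aux_row _ _ (ha i)
        _ = _ := by simp
    · exact ⟨v, hv, rfl⟩
  rw [div_le_iff₀ hpos] at hle
  rw [← hmv, ← aux_enorm_sq, ← mul_pow]
  exact pow_le_pow_left₀ (Real.sqrt_nonneg _) hle 2

lemma aux_sigmaMin_nonneg {I J : Type*} [Fintype I] [Fintype J] (M : Matrix I J ℝ) :
    0 ≤ sigmaMin M := by
  apply Real.sInf_nonneg
  rintro r ⟨w, hw, rfl⟩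
  exact div_nonneg (Real.sqrt_nonneg _) (Real.sqrt_nonneg _)

lemma aux_tilde_nonneg {m n : ℕ} (A : Matrix (Fin m) (Fin n) ℝ) (k : ℕ) :
    0 ≤ sigmaTildeQBMin A k := by
  apply Real.sInf_nonneg
  rintro r ⟨I, J, -, -, rfl⟩
  exact aux_sigmaMin_nonneg _

lemma aux_tilde {m n : ℕ} (A : Matrix (Fin m) (Fin n) ℝ) (k : ℕ) (I : Finset (Fin m))
    (hI : I.card = k) (v : Fin n → ℝ) :
    sigmaTildeQBMin A k ^ 2 * ∑ j, v j ^ 2 ≤ ∑ i ∈ I, ip (A i) v ^ 2 := by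
  by_cases hv : v = 0
  · subst hv; simp [ip]
  obtain ⟨j0, hj0⟩ := Function.ne_iff.1 hv
  let w : {j // j ∈ (Finset.univ : Finset (Fin n))} → ℝ := fun j => v j
  have hw : w ≠ 0 := Function.ne_iff.2 ⟨⟨j0, Finset.mem_univ _⟩, hj0⟩
  have hwp := aux_enorm_pos w hw
  have h1 : sigmaTildeQBMin A k ≤ sigmaMin (subMat A I Finset.univ) := by
    apply csInf_le
    · refine ⟨0, ?_⟩
      rintro r ⟨I, J, -, -, rfl⟩
      exact aux_sigmaMin_nonneg _
    · exact ⟨I, Finset.univ, hI, ⟨j0, Finset.mem_univ _⟩, rfl⟩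
  have h2 : sigmaMin (subMat A I Finset.univ) ≤
      enorm2 ((subMat A I Finset.univ).mulVec w) / enorm2 w := by
    apply csInf_le
    · refine ⟨0, ?_⟩
      rintro r ⟨w, hw, rfl⟩
      exact div_nonneg (Real.sqrt_nonneg _) (Real.sqrt_nonneg _)
    · exact ⟨w, hw, rfl⟩
  have h3 := h1.trans h2
  rw [le_div_iff₀ hwp] at h3
  have h4 := pow_le_pow_left₀ (mul_nonneg (aux_tilde_nonneg A k) hwp.le) h3 2
  rw [mul_pow, aux_enorm_sq, aux_enorm_sq] at h4
  have e1 : ∑ j, w j ^ 2 = ∑ j, v j ^ 2 :=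
    Finset.sum_coe_sort Finset.univ (fun j => v j ^ 2)
  have e2 : ∑ i, ((subMat A I Finset.univ).mulVec w) i ^ 2 = ∑ i ∈ I, ip (A i) v ^ 2 := by
    rw [← Finset.sum_coe_sort I (fun i => ip (A i) v ^ 2)]
    refine Finset.sum_congr rfl fun i _ => ?_
    congr 1
    exact Finset.sum_coe_sort Finset.univ (fun j => A i j * v j)
  rwa [e1, e2] at h4

lemma aux_xmin {n : ℕ} (xhat : Fin n → ℝ) (h : xhat ≠ 0) :
    0 < xminOf xhat ∧ ∀ j, xhat j ≠ 0 → xminOf xhat ≤ |xhat j| := by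
  have hfin : {r | ∃ j, xhat j ≠ 0 ∧ r = |xhat j|}.Finite := by
    apply (Set.finite_range (fun j => |xhat j|)).subset
    rintro r ⟨j, -, rfl⟩
    exact ⟨j, rfl⟩
  obtain ⟨j0, hj0⟩ := Function.ne_iff.1 h
  have hne : {r | ∃ j, xhat j ≠ 0 ∧ r = |xhat j|}.Nonempty := ⟨_, j0, hj0, rfl⟩
  constructor
  · obtain ⟨j, hj, e⟩ := hne.csInf_mem hfin
    unfold xminOf
    rw [e]; exact abs_pos.2 hj
  · intro j hj
    exact csInf_le hfin.bddBelow ⟨j, hj, rfl⟩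

/-- one-step expectation bound for Quantile-RaSK with inexact step in
the corrupted noiseless case, Theorem 3.3(a). -/
theorem stmt12 {m n : ℕ} (lam : ℝ) (hlam : 0 < lam)
    (f : (Fin n → ℝ) → ℝ)
    (hf : f = fun x => lam * norm1 x + (1 / 2) * enorm2 x ^ 2)
    (A : Matrix (Fin m) (Fin n) ℝ)
    (hrank : A.rank = min m n) (hrows : ∀ i, enorm2 (A i) = 1)
    (q β : ℝ) (hβq : β < q) (hq : q < 1 - β)
    (kq kb kqb : ℕ)
    (hkq : (kq : ℝ) = q * m) (hkb : (kb : ℝ) = β * m) (hkqb : (kqb : ℝ) = (q - β) * m)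
    (xhat : Fin n → ℝ) (hAx : A.mulVec xhat ≠ 0)
    (hmin : ∀ z, A.mulVec z = A.mulVec xhat → z ≠ xhat → f xhat < f z)
    (bc : Fin m → ℝ)
    (hbc : (Finset.univ.filter (fun i => bc i ≠ 0)).card = kb)
    (b : Fin m → ℝ) (hb : b = A.mulVec xhat + bc)
    -- condition (3.12)
    (hcond :
      (2 * q / (q - β)) *
          (2 * Real.sqrt β / Real.sqrt (1 - q - β) + β / (1 - q - β)) *
          ((xminOf xhat + 2 * lam) / xminOf xhat) <
        (sigmaTildeQBMin A kqb) ^ 2 / (sigmaMax A) ^ 2)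
    (x xs : Fin n → ℝ) (hxs : xs ∈ subdiff f x)
    (hrange : ∃ u : Fin m → ℝ, xs = A.transpose.mulVec u)
    (Q : ℝ) (hQ : Q = quantileAt kq (fun i => |ip (A i) x - b i|))
    (N2 : Finset (Fin m)) (hN2 : N2 = Finset.univ.filter (fun i => |ip (A i) x - b i| ≤ Q))
    (hN2card : N2.card = kq)
    (xs' x' : Fin m → (Fin n → ℝ))
    (hxs' : ∀ i ∈ N2, xs' i = xs - (ip (A i) x - b i) • A i)
    (hx' : ∀ i ∈ N2, x' i = softShrink lam (xs' i))
    (C : ℝ)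
    (hC : C = ((q - β) / (2 * q ^ 2 * m)) *
          (xminOf xhat / (xminOf xhat + 2 * lam)) * (sigmaTildeQBMin A kqb) ^ 2 -
        (1 / (q * m)) *
          (2 * Real.sqrt β / Real.sqrt (1 - q - β) + β / (1 - q - β)) *
          (sigmaMax A) ^ 2) :
    0 < C ∧
    (1 / (q * m)) * ∑ i ∈ N2, breg f (xs' i) (x' i) xhat ≤
      (1 - C) * breg f xs x xhat := by
  have ha : ∀ i, ∑ j, A i j ^ 2 = 1 := fun i => by
    rw [← aux_enorm_sq, hrows i, one_pow]
  have hxh : xhat ≠ 0 := by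
    rintro rfl; exact hAx (Matrix.mulVec_zero A)
  have hm : 0 < m := by
    rcases Nat.eq_zero_or_pos m with h | h
    · subst h; exact absurd (Subsingleton.elim _ _) hAx
    · exact h
  have hmR : (0 : ℝ) < m := by exact_mod_cast hm
  have hβ : 0 ≤ β := by
    have : (0 : ℝ) ≤ β * m := hkb ▸ Nat.cast_nonneg kb
    exact nonneg_of_mul_nonneg_left this hmR
  have hq0 : 0 < q := by linarith
  obtain ⟨hp, hpx⟩ := aux_xmin xhat hxh
  set p := xminOf xhat with hpdef
  set c := 1 - q - β with hcdef
  have hc : 0 < c := by rw [hcdef]; linarith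
  set σ := sigmaTildeQBMin A kqb with hσ
  set s := sigmaMax A ^ 2 with hs
  set G := 2 * Real.sqrt β / Real.sqrt c + β / c with hG
  have hG0 : 0 ≤ G := by positivity
  have hqβ : 0 < q - β := by linarith
  have hs0 : 0 < s := by
    have h0 : 0 ≤ s := sq_nonneg _
    rcases h0.lt_or_eq with h | h
    · exact h
    · exfalso
      rw [← h, div_zero] at hcond
      have : 0 ≤ 2 * q / (q - β) * G * ((p + 2 * lam) / p) := by positivity
      linarith
  have hCpos : 0 < C := by
    rw [lt_div_iff₀ hs0] at hcond
    have h1 : C = (q - β) / (2 * q ^ 2 * m) * (p / (p + 2 * lam)) *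
        (σ ^ 2 - 2 * q / (q - β) * G * ((p + 2 * lam) / p) * s) := by
      rw [hC]; field_simp
    rw [h1]
    have : 0 < σ ^ 2 - 2 * q / (q - β) * G * ((p + 2 * lam) / p) * s := by linarith
    positivity
  refine ⟨hCpos, ?_⟩
  set D := breg f xs x xhat with hD
  set v := x - xhat with hv
  set E := ∑ j, v j ^ 2 with hE
  have hE0 : 0 ≤ E := Finset.sum_nonneg fun _ _ => sq_nonneg _
  have hED : E ≤ 2 * D := by
    have := aux_strong lam hlam f hf xs x hxs xhat
    simp only [hE, hv, Pi.sub_apply]; linarith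
  have hDE : p * D ≤ (p + 2 * lam) * E := by
    simpa [hE, hv] using aux_upper lam hlam f hf xs x hxs xhat p hp hpx
  have hmax : ∑ i, ip (A i) v ^ 2 ≤ s * E := aux_sigmaMax A ha v
  have hpr : ∀ i, ip (A i) v = (ip (A i) x - b i) + bc i := by
    intro i
    have e1 : ip (A i) v = ip (A i) x - ip (A i) xhat := by
      simp [ip, hv, mul_sub]
    have e2 : b i = ip (A i) xhat + bc i := by rw [hb]; rfl
    rw [e1, e2]; ring
  have hN2mem : ∀ i, i ∈ N2 ↔ |ip (A i) x - b i| ≤ Q := fun i => by rw [hN2]; simp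
  have hkqpos : 0 < kq := by
    have : (0 : ℝ) < kq := by rw [hkq]; positivity
    exact_mod_cast this
  have hQ0 : 0 ≤ Q := by
    obtain ⟨i, hi⟩ := Finset.card_pos.1 (hN2card ▸ hkqpos)
    exact (abs_nonneg _).trans ((hN2mem i).1 hi)
  -- quantile bound
  have hQb : c * m * Q ^ 2 ≤ s * E := by
    set W := (N2ᶜ).filter (fun i => ¬ bc i ≠ 0) with hW
    have hcard : (N2ᶜ).card = m - kq := by rw [Finset.card_compl, hN2card, Fintype.card_fin]
    have hkqm : kq ≤ m := by
      rw [← hN2card]; simpa using Finset.card_le_univ N2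
    have hsplit : ((N2ᶜ).filter (fun i => bc i ≠ 0)).card + W.card = (N2ᶜ).card :=
      Finset.card_filter_add_card_filter_not _
    have hle : ((N2ᶜ).filter (fun i => bc i ≠ 0)).card ≤ kb := by
      rw [← hbc]; exact Finset.card_le_card (Finset.filter_subset_filter _ (Finset.subset_univ _))
    have hWc : m ≤ W.card + kq + kb := by omega
    have hWr : c * m ≤ W.card := by
      have : (m : ℝ) ≤ W.card + kq + kb := by exact_mod_cast hWc
      rw [hcdef]; nlinarith
    calc c * m * Q ^ 2 ≤ W.card * Q ^ 2 := mul_le_mul_of_nonneg_right hWr (sq_nonneg _)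
      _ = ∑ _i ∈ W, Q ^ 2 := by simp
      _ ≤ ∑ i ∈ W, ip (A i) v ^ 2 := by
        refine Finset.sum_le_sum fun i hi => ?_
        rw [hW, Finset.mem_filter, Finset.mem_compl, hN2mem] at hi
        obtain ⟨h1, h2⟩ := hi
        push Not at h1 h2
        rw [hpr, h2, add_zero, ← sq_abs (ip (A i) x - b i)]
        exact pow_le_pow_left₀ hQ0 h1.le 2
      _ ≤ ∑ i, ip (A i) v ^ 2 :=
        Finset.sum_le_sum_of_subset_of_nonneg (Finset.subset_univ _) fun _ _ _ => sq_nonneg _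
      _ ≤ s * E := hmax
  set S := N2.filter (fun i => bc i ≠ 0) with hS
  set U := N2.filter (fun i => ¬ bc i ≠ 0) with hU
  have hSU : S.card + U.card = kq := by
    rw [← hN2card]; exact Finset.card_filter_add_card_filter_not _
  have hScard : S.card ≤ kb := by
    rw [← hbc]; exact Finset.card_le_card (Finset.filter_subset_filter _ (Finset.subset_univ _))
  have hSr : (S.card : ℝ) ≤ β * m := by rw [← hkb]; exact_mod_cast hScard
  have hUcard : kqb ≤ U.card := by
    have h1 : (kq : ℝ) = kqb + kb := by rw [hkq, hkb, hkqb]; ring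
    have h2 : kq = kqb + kb := by exact_mod_cast h1
    omega
  have hUlow : σ ^ 2 * E ≤ ∑ i ∈ U, ip (A i) v ^ 2 := by
    obtain ⟨I, hIU, hI⟩ := Finset.exists_subset_card_eq hUcard
    exact (aux_tilde A kqb I hI v).trans
      (Finset.sum_le_sum_of_subset_of_nonneg hIU fun _ _ _ => sq_nonneg _)
  have hcross : Q * ∑ i ∈ S, |ip (A i) v| ≤ Real.sqrt β / Real.sqrt c * (s * E) := by
    apply (sq_le_sq₀ (mul_nonneg hQ0 (Finset.sum_nonneg fun _ _ => abs_nonneg _))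
      (by positivity)).1
    have h1 : (∑ i ∈ S, |ip (A i) v|) ^ 2 ≤ β * m * (s * E) := by
      refine sq_sum_le_card_mul_sum_sq.trans ?_
      apply mul_le_mul hSr _ (Finset.sum_nonneg fun _ _ => sq_nonneg _) (by positivity)
      simp only [sq_abs]
      exact (Finset.sum_le_sum_of_subset_of_nonneg (Finset.subset_univ _)
        fun _ _ _ => sq_nonneg _).trans hmax
    rw [mul_pow, mul_pow, div_pow, Real.sq_sqrt hβ, Real.sq_sqrt hc.le]
    calc Q ^ 2 * (∑ i ∈ S, |ip (A i) v|) ^ 2 ≤ Q ^ 2 * (β * m * (s * E)) :=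
          mul_le_mul_of_nonneg_left h1 (sq_nonneg _)
      _ = β / c * (s * E) * (c * m * Q ^ 2) := by field_simp
      _ ≤ β / c * (s * E) * (s * E) := mul_le_mul_of_nonneg_left hQb (by positivity)
      _ = _ := by ring
  have hSq : (S.card : ℝ) * (Q ^ 2 / 2) ≤ β / c * (s * E) / 2 := by
    calc (S.card : ℝ) * (Q ^ 2 / 2) ≤ β * m * (Q ^ 2 / 2) :=
          mul_le_mul_of_nonneg_right hSr (by positivity)
      _ = β / c * (c * m * Q ^ 2) / 2 := by field_simp
      _ ≤ _ := by
        have := mul_le_mul_of_nonneg_left hQb (by positivity : 0 ≤ β / c)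
        linarith
  have hstep : ∀ i ∈ N2, breg f (xs' i) (x' i) xhat ≤
      D - (ip (A i) x - b i) * ip (A i) v + (ip (A i) x - b i) ^ 2 / 2 := by
    intro i hi
    rw [hxs' i hi]
    exact aux_step lam hlam f hf xs x hxs (A i) xhat (x' i) (ha i) _
  have hsumS : ∑ i ∈ S, breg f (xs' i) (x' i) xhat ≤
      S.card * D + Q * ∑ i ∈ S, |ip (A i) v| + S.card * (Q ^ 2 / 2) := by
    have : S.card * D + Q * ∑ i ∈ S, |ip (A i) v| + S.card * (Q ^ 2 / 2) =
        ∑ i ∈ S, (D + Q * |ip (A i) v| + Q ^ 2 / 2) := by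
      rw [Finset.sum_add_distrib, Finset.sum_add_distrib, ← Finset.mul_sum]; simp
    rw [this]
    refine Finset.sum_le_sum fun i hi => ?_
    have hi2 : i ∈ N2 := (Finset.mem_filter.1 hi).1
    refine (hstep i hi2).trans ?_
    have hr := (hN2mem i).1 hi2
    have h1 : (ip (A i) x - b i) ^ 2 ≤ Q ^ 2 := by
      rw [← sq_abs]; exact pow_le_pow_left₀ (abs_nonneg _) hr 2
    have h2 : -((ip (A i) x - b i) * ip (A i) v) ≤ Q * |ip (A i) v| := by
      refine (neg_le_abs _).trans ?_
      rw [abs_mul]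
      exact mul_le_mul_of_nonneg_right hr (abs_nonneg _)
    linarith
  have hsumU : ∑ i ∈ U, breg f (xs' i) (x' i) xhat ≤
      U.card * D - (∑ i ∈ U, ip (A i) v ^ 2) / 2 := by
    have : U.card * D - (∑ i ∈ U, ip (A i) v ^ 2) / 2 =
        ∑ i ∈ U, (D - ip (A i) v ^ 2 / 2) := by
      rw [Finset.sum_sub_distrib, Finset.sum_div]; simp
    rw [this]
    refine Finset.sum_le_sum fun i hi => ?_
    obtain ⟨hi2, hb0⟩ := Finset.mem_filter.1 hi
    push Not at hb0
    refine (hstep i hi2).trans ?_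
    have := hpr i
    rw [hb0, add_zero] at this
    rw [← this]; linarith [sq_nonneg (ip (A i) v)]
  have hsum : ∑ i ∈ N2, breg f (xs' i) (x' i) xhat =
      ∑ i ∈ S, breg f (xs' i) (x' i) xhat + ∑ i ∈ U, breg f (xs' i) (x' i) xhat :=
    (Finset.sum_filter_add_sum_filter_not N2 (fun i => bc i ≠ 0) _).symm
  have hcards : (S.card : ℝ) + U.card = q * m := by rw [← hkq]; exact_mod_cast hSU
  have hD0 : 0 ≤ D := by linarith
  have hlow : (q - β) / (2 * q) * (p / (p + 2 * lam)) * σ ^ 2 * D ≤ σ ^ 2 * E / 2 := by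
    have h1 : p / (p + 2 * lam) * D ≤ E := by
      rw [div_mul_eq_mul_div, div_le_iff₀ (by positivity)]; linarith
    have h2 : (q - β) / (2 * q) ≤ 1 / 2 := by
      rw [div_le_div_iff₀ (by positivity) (by norm_num)]; linarith
    calc (q - β) / (2 * q) * (p / (p + 2 * lam)) * σ ^ 2 * D
        = (q - β) / (2 * q) * (σ ^ 2 * (p / (p + 2 * lam) * D)) := by ring
      _ ≤ 1 / 2 * (σ ^ 2 * E) := by
        apply mul_le_mul h2 (mul_le_mul_of_nonneg_left h1 (sq_nonneg _)) (by positivity)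
          (by norm_num)
      _ = _ := by ring
  have hGD : G * s * E / 2 ≤ G * s * D := by
    have := mul_le_mul_of_nonneg_left hED (by positivity : 0 ≤ G * s)
    linarith
  have hGE : Real.sqrt β / Real.sqrt c * (s * E) + β / c * (s * E) / 2 = G * s * E / 2 := by
    rw [hG]; ring
  have hqm : 0 < q * m := by positivity
  have hCq : q * m * C = (q - β) / (2 * q) * (p / (p + 2 * lam)) * σ ^ 2 - G * s := by
    rw [hC]; field_simp
  rw [one_div, inv_mul_le_iff₀ hqm, hsum]
  have hfin : q * m * ((1 - C) * D) = (S.card + U.card) * D -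
      ((q - β) / (2 * q) * (p / (p + 2 * lam)) * σ ^ 2 * D - G * s * D) := by
    rw [hcards]
    calc q * m * ((1 - C) * D) = q * m * D - (q * m * C) * D := by ring
      _ = _ := by rw [hCq]; ring
  rw [hfin]
  linarith
end
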